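/- arXiv:1407.6077 — 2 statements merged into one kernel-verified Lean document; each statement's English description precedes it below -/
import Mathlib

section
/- Let λ = (λ_1 ≥ … ≥ λ_k ≥ 1) be a partition with k positive parts, let 0 ≤ t ≤ k−1, and let n ≥ k. Set μ := (λ_1,…,λ_t, λ_{t+2}−1, …, λ_k−1), ν := (λ_1+1,…,λ_t+1, λ_{t+2},…,λ_k), and ρ := (λ_1−1,…,λ_k−1). Then, as polynomials in x_1,…,x_n: s^{[n]}_{λ/1} · s^{[n]}_μ = s^{[n]}_{μ/1} · s^{[n]}_λ + s^{[n]}_ρ · s^{[n]}_ν. -/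
/-- A semistandard Young tableau of shape `(lam 0, lam 1, …, lam (k-1))` (so `lam i` is the
length of the `(i+1)`-st row), with entries in `{a, a+1, …, b}`: rows weakly increase,
columns strictly increase.  Entries outside the shape are `0`. -/
structure SSYT (k : ℕ) (lam : ℕ → ℤ) (a b : ℕ) where
  entry : ℕ → ℕ → ℕ
  zero_outside : ∀ i j : ℕ, ¬(i < k ∧ (j : ℤ) < lam i) → entry i j = 0
  lower : ∀ i j : ℕ, i < k → (j : ℤ) < lam i → a ≤ entry i j
  upper : ∀ i j : ℕ, i < k → (j : ℤ) < lam i → entry i j ≤ b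
  row_weak : ∀ i j₁ j₂ : ℕ, i < k → j₁ ≤ j₂ → (j₂ : ℤ) < lam i → entry i j₁ ≤ entry i j₂
  col_strict : ∀ i₁ i₂ j : ℕ, i₁ < i₂ → i₂ < k → (j : ℤ) < lam i₂ → entry i₁ j < entry i₂ j

/-- The monomial `Π_i x_i^{m(i,T)}` of a tableau: the product of `x_{T(c)}` over the
cells `c` of the shape. -/
noncomputable def SSYT.weight {k : ℕ} {lam : ℕ → ℤ} {a b : ℕ} (T : SSYT k lam a b) :
    MvPolynomial ℕ ℤ :=
  ∏ i ∈ Finset.range k, ∏ j ∈ Finset.range (lam i).toNat, MvPolynomial.X (T.entry i j)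

/-- `(lam 0, …, lam (k-1))` is a partition: weakly decreasing with nonnegative entries. -/
def IsPartitionSeq (k : ℕ) (lam : ℕ → ℤ) : Prop :=
  (∀ i, i + 1 < k → lam (i + 1) ≤ lam i) ∧ (∀ i, i < k → 0 ≤ lam i)

/-- The Schur polynomial `s^{[a,b]}_lam = Σ_T Π_i x_i^{m(i,T)}`, the sum running over all
semistandard Young tableaux of shape `lam` with entries in `{a,…,b}`; by convention it is
`0` if `lam` is not a partition. -/
noncomputable def schur (k : ℕ) (lam : ℕ → ℤ) (a b : ℕ) : MvPolynomial ℕ ℤ :=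
  letI := Classical.dec (IsPartitionSeq k lam)
  if IsPartitionSeq k lam then ∑ᶠ T : SSYT k lam a b, T.weight else 0

/-- The skew Schur polynomial `s^{[a,b]}_{α/1} = Σ_β s^{[a,b]}_β`, where `β` runs over the
partitions obtained from `α` by removing a single box (removals yielding non-partitions
contribute `0` by the convention built into `schur`). -/
noncomputable def schurSkew1 (k : ℕ) (lam : ℕ → ℤ) (a b : ℕ) : MvPolynomial ℕ ℤ :=
  ∑ i ∈ Finset.range k, schur k (Function.update lam i (lam i - 1)) a b

/-!
Write `a(l) = det (x_i ^ l_j)` for the alternant with exponents `l` and `δ = (n - 1, …, 1, 0)`.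
Splitting off the largest entry of a tableau and row-reducing an alternant lead to the same
branching recursion, which gives the bialternant formula `a(δ) s_λ = a(λ + δ)`.

Lowering the exponents of an alternant one at a time multiplies it by `∑ x_i⁻¹` in total. If `λ`
has fewer than `n` rows, the lowerings that do not remove a box repeat an exponent, except that of
the last exponent `0` to `-1`; hence
`a(δ) s_{λ/1} = (∑ x_i⁻¹) a(λ + δ) - a(λ + δ with last exponent -1)`.
After multiplication by `a(δ) ^ 2` the terms with `∑ x_i⁻¹` cancel. The alternants that remain
arise, up to sign and powers of `x_1 ⋯ x_n`, from `λ + δ` by putting `n - k` or `-1` in place of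
the exponent of row `t + 1` or of the last row, so that the identity is a three-term Plücker
relation. This needs `n > k`; setting the surplus variables to zero then gives every smaller `n`.
-/

attribute [ext] SSYT

namespace IsPartitionSeq

variable {k : ℕ} {lam : ℕ → ℤ}

theorem le_of_le (h : IsPartitionSeq k lam) {i j : ℕ} (hij : i ≤ j) (hj : j < k) :
    lam j ≤ lam i := by
  induction j, hij using Nat.le_induction with
  | base => exact le_rfl
  | succ j _ ih => exact (h.1 j hj).trans (ih (by omega))

theorem anti {n : ℕ} (h : IsPartitionSeq n lam) (hkn : k ≤ n) : IsPartitionSeq k lam :=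
  ⟨fun i hi ↦ h.1 i (hi.trans_le hkn), fun i hi ↦ h.2 i (hi.trans_le hkn)⟩

theorem add_one (h : IsPartitionSeq k lam) : IsPartitionSeq k (fun j ↦ lam j + 1) :=
  ⟨fun i hi ↦ by grind [h.1 i hi], fun i hi ↦ by grind [h.2 i hi]⟩

end IsPartitionSeq

/-- The finite sequence `m` continued by zeros. For `lam : ℕ → ℤ`, the sequence
`zeroExtend k (lam ·)` is the partition `(lam 0, …, lam (k - 1))` with trailing zeros. -/
def zeroExtend (k : ℕ) (m : Fin k → ℤ) : ℕ → ℤ := fun i ↦ if h : i < k then m ⟨i, h⟩ else 0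

section ZeroExtend

variable {k : ℕ}

theorem zeroExtend_of_lt (m : Fin k → ℤ) {i : ℕ} (hi : i < k) :
    zeroExtend k m i = m ⟨i, hi⟩ :=
  dif_pos hi

@[simp]
theorem zeroExtend_val (m : Fin k → ℤ) (i : Fin k) : zeroExtend k m i = m i :=
  zeroExtend_of_lt m i.2

theorem zeroExtend_of_le (m : Fin k → ℤ) {i : ℕ} (hi : k ≤ i) : zeroExtend k m i = 0 :=
  dif_neg hi.not_gt

theorem zeroExtend_snoc_zero (m : Fin k → ℤ) :
    zeroExtend (k + 1) (Fin.snoc m (0 : ℤ)) = zeroExtend k m := by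
  funext i
  rcases lt_trichotomy i k with hi | rfl | hi
  · rw [zeroExtend_of_lt _ (by omega), zeroExtend_of_lt _ hi]
    exact Fin.snoc_castSucc (α := fun _ ↦ ℤ) _ _ ⟨i, hi⟩
  · rw [zeroExtend_of_lt _ (by omega), zeroExtend_of_le _ le_rfl]
    exact Fin.snoc_last (α := fun _ ↦ ℤ) _ _
  · rw [zeroExtend_of_le _ (by omega), zeroExtend_of_le _ hi.le]

theorem IsPartitionSeq.zeroExtend {lam : ℕ → ℤ} (h : IsPartitionSeq k lam) (n : ℕ) :
    IsPartitionSeq n (zeroExtend k (lam ·)) := by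
  constructor <;> intro i _
  · grind [_root_.zeroExtend, IsPartitionSeq]
  · grind [_root_.zeroExtend, IsPartitionSeq]

end ZeroExtend

namespace SSYT

variable {k : ℕ} {lam : ℕ → ℤ} {a b : ℕ}

theorem entry_le (T : SSYT k lam a b) (i j : ℕ) : T.entry i j ≤ b := by
  by_cases h : i < k ∧ (j : ℤ) < lam i
  · exact T.upper i j h.1 h.2
  · simp [T.zero_outside i j h]

instance instFinite : Finite (SSYT k lam a b) := by
  let entries (T : SSYT k lam a b) (i : Fin k) (j : Fin (lam i).toNat) : Fin (b + 1) :=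
    ⟨T.entry i j, Nat.lt_succ_of_le (T.entry_le i j)⟩
  refine Finite.of_injective entries fun T U h ↦ SSYT.ext (funext₂ fun i j ↦ ?_)
  by_cases hij : i < k ∧ (j : ℤ) < lam i
  · exact congrArg Fin.val (congrFun (congrFun h ⟨i, hij.1⟩) ⟨j, Int.lt_toNat.2 hij.2⟩)
  · rw [T.zero_outside i j hij, U.zero_outside i j hij]

noncomputable instance instFintype : Fintype (SSYT k lam a b) := Fintype.ofFinite _

instance instUniqueZero : Unique (SSYT 0 lam a b) where
  default :=
    { entry := fun _ _ ↦ 0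
      zero_outside := fun _ _ _ ↦ rfl
      lower := fun _ _ h ↦ absurd h (Nat.not_lt_zero _)
      upper := fun _ _ h ↦ absurd h (Nat.not_lt_zero _)
      row_weak := fun _ _ _ h ↦ absurd h (Nat.not_lt_zero _)
      col_strict := fun _ _ _ _ h ↦ absurd h (Nat.not_lt_zero _) }
  uniq T := SSYT.ext (funext₂ fun i j ↦ T.zero_outside i j fun h ↦ Nat.not_lt_zero _ h.1)

theorem add_row_le_entry (hlam : IsPartitionSeq k lam) (T : SSYT k lam a b) {i j : ℕ} (hi : i < k)
    (hj : (j : ℤ) < lam i) : a + i ≤ T.entry i j := by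
  induction i with
  | zero => exact T.lower 0 j hi hj
  | succ i ih =>
    have above := ih (by omega) (hj.trans_le (hlam.1 i hi))
    have := T.col_strict i (i + 1) j i.lt_succ_self hi hj
    omega

/-- A tableau regarded as a tableau of a shape with the same cells, which may be described by
another number of rows or other values of `lam` outside them. -/
def castShape {k' : ℕ} {lam' : ℕ → ℤ}
    (h : ∀ i j : ℕ, (i < k ∧ (j : ℤ) < lam i) ↔ (i < k' ∧ (j : ℤ) < lam' i))
    (T : SSYT k lam a b) : SSYT k' lam' a b where
  entry := T.entry
  zero_outside i j hij := T.zero_outside i j (mt (h i j).1 hij)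
  lower i j hi hj := have cell := (h i j).2 ⟨hi, hj⟩; T.lower i j cell.1 cell.2
  upper i j hi hj := have cell := (h i j).2 ⟨hi, hj⟩; T.upper i j cell.1 cell.2
  row_weak i j₁ j₂ hi hj hj₂ :=
    have cell := (h i j₂).2 ⟨hi, hj₂⟩; T.row_weak i j₁ j₂ cell.1 hj cell.2
  col_strict i₁ i₂ j hi hi₂ hj :=
    have cell := (h i₂ j).2 ⟨hi₂, hj⟩; T.col_strict i₁ i₂ j hi cell.1 cell.2

end SSYT

section SchurBasic

variable {k : ℕ} {lam : ℕ → ℤ} {a b : ℕ}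

theorem schur_eq_sum_weight (a b : ℕ) (h : IsPartitionSeq k lam) :
    schur k lam a b = ∑ T : SSYT k lam a b, T.weight := by
  rw [schur, if_pos h, finsum_eq_sum_of_fintype]

theorem schur_eq_zero_of_not_isPartitionSeq (a b : ℕ) (h : ¬IsPartitionSeq k lam) :
    schur k lam a b = 0 :=
  if_neg h

theorem schur_zero (lam : ℕ → ℤ) (a b : ℕ) : schur 0 lam a b = 1 := by
  rw [schur_eq_sum_weight a b ⟨by simp, by simp⟩, Fintype.sum_unique]
  simp [SSYT.weight]

theorem schur_eq_zero_of_lt_add (hlam : IsPartitionSeq k lam) {i : ℕ} (hi : i < k)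
    (hpos : 0 < lam i) (hb : b < a + i) : schur k lam a b = 0 := by
  have : IsEmpty (SSYT k lam a b) :=
    ⟨fun T ↦ hb.not_ge ((T.add_row_le_entry hlam hi hpos).trans (T.entry_le i 0))⟩
  rw [schur_eq_sum_weight a b hlam, Fintype.sum_empty]

theorem schur_zeroExtend {n : ℕ} (hkn : k ≤ n) (hlam : IsPartitionSeq k lam) (a b : ℕ) :
    schur n (zeroExtend k (lam ·)) a b = schur k lam a b := by
  rw [schur_eq_sum_weight a b hlam, schur_eq_sum_weight a b (hlam.zeroExtend n)]
  have cells (i j : ℕ) :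
      (i < n ∧ (j : ℤ) < zeroExtend k (lam ·) i) ↔ (i < k ∧ (j : ℤ) < lam i) := by
    grind [zeroExtend]
  refine Fintype.sum_equiv ⟨SSYT.castShape cells, SSYT.castShape fun i j ↦ (cells i j).symm,
    fun _ ↦ rfl, fun _ ↦ rfl⟩ _ _ fun T ↦ ?_
  rw [SSYT.weight, SSYT.weight, ← Finset.prod_subset (Finset.range_subset_range.2 hkn)]
  · refine Finset.prod_congr rfl fun i hi ↦ ?_
    rw [zeroExtend_of_lt _ (Finset.mem_range.1 hi)]
    rfl
  · intro i _ hi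
    simp [zeroExtend_of_le (lam ·) (not_lt.1 (mt Finset.mem_range.2 hi))]

end SchurBasic

/-- The partitions `m` such that `lam / m` is a horizontal strip:
`lam 0 ≥ m 0 ≥ lam 1 ≥ m 1 ≥ ⋯ ≥ lam (k - 1) ≥ m (k - 1) ≥ 0`. -/
noncomputable def interlacing (k : ℕ) (lam : ℕ → ℤ) : Finset (Fin k → ℤ) :=
  Fintype.piFinset fun i ↦ Finset.Icc (zeroExtend k (lam ·) (i + 1)) (lam i)

section Interlacing

variable {k : ℕ} {lam : ℕ → ℤ} {m : Fin k → ℤ}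

theorem mem_interlacing :
    m ∈ interlacing k lam ↔ ∀ i : Fin k, zeroExtend k (lam ·) (i + 1) ≤ m i ∧ m i ≤ lam i := by
  simp only [interlacing, Fintype.mem_piFinset, Finset.mem_Icc]

theorem mem_interlacing_self (hlam : IsPartitionSeq k lam) :
    (fun i : Fin k ↦ lam i) ∈ interlacing k lam := by
  refine mem_interlacing.2 fun i ↦ ⟨?_, le_rfl⟩
  rw [← zeroExtend_val (lam ·) i]
  exact (hlam.zeroExtend (i + 2)).1 i (by omega)

theorem isPartitionSeq_of_mem_interlacing (hlam : IsPartitionSeq k lam)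
    (hm : m ∈ interlacing k lam) : IsPartitionSeq k (zeroExtend k m) := by
  rw [mem_interlacing] at hm
  constructor
  · intro i hi
    rw [zeroExtend_of_lt m hi, zeroExtend_of_lt m (by omega)]
    have := (hm ⟨i, by omega⟩).1
    rw [zeroExtend_of_lt _ hi] at this
    exact (hm ⟨i + 1, hi⟩).2.trans this
  · intro i hi
    rw [zeroExtend_of_lt m hi]
    exact ((hlam.zeroExtend (i + 2)).2 (i + 1) (by omega)).trans (hm ⟨i, hi⟩).1

theorem snoc_zero_mem_interlacing (hlam : IsPartitionSeq (k + 1) lam) :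
    (Fin.snoc m 0 : Fin (k + 1) → ℤ) ∈ interlacing (k + 1) lam ↔
      ∀ i : Fin k, m i ∈ Finset.Icc (lam (i + 1)) (lam i) := by
  simp [mem_interlacing, Fin.forall_fin_succ', zeroExtend, hlam.2 k k.lt_succ_self]

theorem isPartitionSeq_of_forall_mem_Icc (hlam : IsPartitionSeq (k + 1) lam)
    (hm : ∀ i : Fin k, m i ∈ Finset.Icc (lam (i + 1)) (lam i)) :
    IsPartitionSeq k (zeroExtend k m) := by
  have := isPartitionSeq_of_mem_interlacing hlam ((snoc_zero_mem_interlacing hlam).2 hm)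
  rw [zeroExtend_snoc_zero] at this
  exact this.anti k.le_succ

end Interlacing

namespace SSYT

variable {k : ℕ} {lam : ℕ → ℤ} {a b c : ℕ} {m : Fin k → ℤ}

/-- The row lengths of the part of `T` formed by the entries at most `c`. -/
def rowCounts (T : SSYT k lam a b) (c : ℕ) : Fin k → ℤ :=
  fun i ↦ (Finset.filter (fun j ↦ T.entry i j ≤ c) (Finset.range (lam i).toNat)).card

theorem lt_rowCounts_iff (T : SSYT k lam a b) (c : ℕ) (i : Fin k) (j : ℕ) :
    (j : ℤ) < T.rowCounts c i ↔ (j : ℤ) < lam i ∧ T.entry i j ≤ c := by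
  rw [rowCounts, Nat.cast_lt]
  set S := Finset.filter (fun j ↦ T.entry i j ≤ c) (Finset.range (lam i).toNat)
  have mem_S (j : ℕ) : j ∈ S ↔ (j : ℤ) < lam i ∧ T.entry i j ≤ c := by simp [S]
  have lower {j₁ j₂ : ℕ} (hj : j₁ ≤ j₂) (h : j₂ ∈ S) : j₁ ∈ S := by
    obtain ⟨hlam, hc⟩ := (mem_S j₂).1 h
    exact (mem_S j₁).2 ⟨by omega, (T.row_weak i j₁ j₂ i.2 hj hlam).trans hc⟩
  rw [← mem_S]
  constructor <;> intro h
  · by_contra hj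
    have : S ⊆ Finset.range j := fun j' hj' ↦
      Finset.mem_range.2 (not_le.1 fun hle ↦ hj (lower hle hj'))
    exact absurd (Finset.card_le_card this) (by simpa using h)
  · have : Finset.range (j + 1) ⊆ S := fun j' hj' ↦
      lower (Nat.lt_succ_iff.1 (Finset.mem_range.1 hj')) h
    simpa using Finset.card_le_card this

theorem lt_zeroExtend_rowCounts_iff (T : SSYT k lam a b) (c i j : ℕ) :
    (j : ℤ) < zeroExtend k (T.rowCounts c) i ↔ i < k ∧ (j : ℤ) < lam i ∧ T.entry i j ≤ c := by
  by_cases hi : i < k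
  · simp only [hi, true_and, zeroExtend_of_lt, lt_rowCounts_iff]
  · simp [hi, zeroExtend_of_le _ (not_lt.1 hi)]

theorem rowCounts_mem_interlacing (hlam : IsPartitionSeq k lam) (T : SSYT k lam a (b + 1)) :
    T.rowCounts b ∈ interlacing k lam := by
  refine mem_interlacing.2 fun i ↦ ⟨?_, ?_⟩
  · by_contra! h
    obtain ⟨c, hc⟩ := Int.eq_ofNat_of_zero_le (a := T.rowCounts b i) (Nat.cast_nonneg _)
    have hi : (i : ℕ) + 1 < k := by
      by_contra hi
      rw [zeroExtend_of_le _ (by omega)] at h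
      omega
    rw [zeroExtend_of_lt _ hi, hc] at h
    have strict := T.col_strict i (i + 1) c (by omega) hi h
    have := (T.lt_rowCounts_iff b i c).2
      ⟨h.trans_le (hlam.1 i hi), by have := T.entry_le (i + 1) c; omega⟩
    omega
  · by_contra! h
    have := ((T.lt_rowCounts_iff b i (lam i).toNat).1
      (by rwa [Int.toNat_of_nonneg (hlam.2 i i.2)])).1
    omega

/-- The part of a tableau formed by its entries at most `c`; its shape is passed as a separate
argument so that it need not be syntactically `T.rowCounts c`. -/
def restrict (T : SSYT k lam a b) (hm : T.rowCounts c = m) : SSYT k (zeroExtend k m) a c where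
  entry i j := if (j : ℤ) < zeroExtend k m i then T.entry i j else 0
  zero_outside i j h := if_neg fun hj ↦
    h ⟨((T.lt_zeroExtend_rowCounts_iff c i j).1 (hm ▸ hj)).1, hj⟩
  lower i j hi hj := by
    rw [if_pos hj]
    exact T.lower i j hi ((T.lt_zeroExtend_rowCounts_iff c i j).1 (hm ▸ hj)).2.1
  upper i j _ hj := by
    rw [if_pos hj]
    exact ((T.lt_zeroExtend_rowCounts_iff c i j).1 (hm ▸ hj)).2.2
  row_weak i j₁ j₂ hi hj hj₂ := by
    rw [if_pos hj₂, if_pos (by omega)]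
    exact T.row_weak i j₁ j₂ hi hj ((T.lt_zeroExtend_rowCounts_iff c i j₂).1 (hm ▸ hj₂)).2.1
  col_strict i₁ i₂ j hi hi₂ hj := by
    have strict := T.col_strict i₁ i₂ j hi hi₂
      ((T.lt_zeroExtend_rowCounts_iff c i₂ j).1 (hm ▸ hj)).2.1
    rw [if_pos hj]
    split_ifs
    exacts [strict, by omega]

/-- The tableau obtained by filling the horizontal strip `lam / m` with entries `b + 1`. -/
def extend (hlam : IsPartitionSeq k lam) (hm : m ∈ interlacing k lam) (hab : a ≤ b + 1)
    (T : SSYT k (zeroExtend k m) a b) : SSYT k lam a (b + 1) where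
  entry i j := if (j : ℤ) < zeroExtend k m i then T.entry i j else
    if i < k ∧ (j : ℤ) < lam i then b + 1 else 0
  zero_outside i j h := by
    rw [if_neg, if_neg h]
    intro hj
    have hi : i < k := by
      by_contra hi
      rw [zeroExtend_of_le _ (not_lt.1 hi)] at hj
      omega
    rw [zeroExtend_of_lt m hi] at hj
    exact h ⟨hi, hj.trans_le (mem_interlacing.1 hm ⟨i, hi⟩).2⟩
  lower i j hi hj := by
    split_ifs with hj' hij
    exacts [T.lower i j hi hj', hab, absurd ⟨hi, hj⟩ hij]
  upper i j _ _ := by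
    have := T.entry_le i j
    split_ifs <;> omega
  row_weak i j₁ j₂ hi hj hj₂ := by
    have := T.entry_le i j₁
    by_cases hj₂' : (j₂ : ℤ) < zeroExtend k m i
    · rw [if_pos hj₂', if_pos (by omega)]
      exact T.row_weak i j₁ j₂ hi hj hj₂'
    · rw [if_neg hj₂', if_pos (And.intro hi hj₂)]
      split_ifs <;> omega
  col_strict i₁ i₂ j hi hi₂ hj := by
    have hj₁ : (j : ℤ) < zeroExtend k m i₁ := by
      have hm₁ := (mem_interlacing.1 hm ⟨i₁, hi.trans hi₂⟩).1
      rw [zeroExtend_of_lt _ (show i₁ + 1 < k by omega)] at hm₁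
      rw [zeroExtend_of_lt m (hi.trans hi₂)]
      exact hj.trans_le ((hlam.le_of_le (Nat.succ_le_of_lt hi) hi₂).trans hm₁)
    have := T.entry_le i₁ j
    rw [if_pos hj₁]
    split_ifs with hj₂ hj₂'
    exacts [T.col_strict i₁ i₂ j hi hi₂ hj₂, by omega, absurd ⟨hi₂, hj⟩ hj₂']

theorem rowCounts_extend (hlam : IsPartitionSeq k lam) (hm : m ∈ interlacing k lam)
    (hab : a ≤ b + 1) (T : SSYT k (zeroExtend k m) a b) :
    (extend hlam hm hab T).rowCounts b = m := by
  funext i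
  have hm₀ : 0 ≤ m i := by
    simpa using (isPartitionSeq_of_mem_interlacing hlam hm).2 i i.2
  have hcount : 0 ≤ (extend hlam hm hab T).rowCounts b i := Nat.cast_nonneg _
  have lt_iff (j : ℕ) : (j : ℤ) < (extend hlam hm hab T).rowCounts b i ↔ (j : ℤ) < m i := by
    have hm₁ := (mem_interlacing.1 hm i).2
    have := T.entry_le i j
    simp only [lt_rowCounts_iff, extend, zeroExtend_val]
    grind
  have := lt_iff (m i).toNat
  have := lt_iff ((extend hlam hm hab T).rowCounts b i).toNat
  omega

theorem restrict_extend (hlam : IsPartitionSeq k lam) (hm : m ∈ interlacing k lam)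
    (hab : a ≤ b + 1) (T : SSYT k (zeroExtend k m) a b) :
    (extend hlam hm hab T).restrict (rowCounts_extend hlam hm hab T) = T := by
  ext i j
  simp only [restrict, extend]
  split_ifs with hj
  exacts [rfl, (T.zero_outside i j fun h ↦ hj h.2).symm]

theorem entry_eq_of_rowCounts_le (T : SSYT k lam a (b + 1)) {i j : ℕ} (hi : i < k)
    (hj : (j : ℤ) < lam i) (hcount : zeroExtend k (T.rowCounts b) i ≤ j) :
    T.entry i j = b + 1 := by
  have := T.entry_le i j
  have := mt (T.lt_zeroExtend_rowCounts_iff b i j).2 hcount.not_gt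
  grind

theorem extend_restrict (hlam : IsPartitionSeq k lam) (hm : m ∈ interlacing k lam)
    (hab : a ≤ b + 1) (T : SSYT k lam a (b + 1)) (hT : T.rowCounts b = m) :
    extend hlam hm hab (T.restrict hT) = T := by
  subst hT
  ext i j
  simp only [restrict, extend]
  split_ifs with hj hij
  · rfl
  · exact (T.entry_eq_of_rowCounts_le hij.1 hij.2 (not_lt.1 hj)).symm
  · exact (T.zero_outside i j hij).symm

theorem weight_eq_weight_restrict_mul (hlam : IsPartitionSeq k lam) (T : SSYT k lam a (b + 1))
    (hT : T.rowCounts b = m) :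
    T.weight = (T.restrict hT).weight *
      ∏ i : Fin k, MvPolynomial.X (b + 1) ^ (lam i - m i).toNat := by
  subst hT
  rw [weight, weight, Finset.prod_range, Finset.prod_range, ← Finset.prod_mul_distrib]
  refine Finset.prod_congr rfl fun i _ ↦ ?_
  have hle := (mem_interlacing.1 (T.rowCounts_mem_interlacing hlam) i).2
  have hcount : 0 ≤ T.rowCounts b i := Nat.cast_nonneg _
  rw [zeroExtend_val, ← Finset.prod_range_mul_prod_Ico _ (Int.toNat_le_toNat hle)]
  congr 1
  · refine Finset.prod_congr rfl fun j hj ↦ ?_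
    exact congrArg MvPolynomial.X (if_pos (by simpa using hj)).symm
  · have entries (j : ℕ) (hj : j ∈ Finset.Ico (T.rowCounts b i).toNat (lam i).toNat) :
        MvPolynomial.X (R := ℤ) (T.entry i j) = MvPolynomial.X (b + 1) := by
      rw [Finset.mem_Ico] at hj
      rw [T.entry_eq_of_rowCounts_le i.2 (by omega) (by rw [zeroExtend_val]; omega)]
    rw [Finset.prod_congr rfl entries, Finset.prod_const, Nat.card_Ico]
    congr 1
    omega

end SSYT

section Branching

variable {k : ℕ} {lam : ℕ → ℤ} {a b : ℕ}

theorem schur_succ_eq_sum_interlacing (hlam : IsPartitionSeq k lam) (hab : a ≤ b + 1) :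
    schur k lam a (b + 1) = ∑ m ∈ interlacing k lam, schur k (zeroExtend k m) a b *
      ∏ i : Fin k, MvPolynomial.X (b + 1) ^ (lam i - m i).toNat := by
  rw [schur_eq_sum_weight _ _ hlam, ← Finset.sum_fiberwise_of_maps_to
    (fun T _ ↦ T.rowCounts_mem_interlacing hlam)]
  refine Finset.sum_congr rfl fun m hm ↦ ?_
  rw [schur_eq_sum_weight _ _ (isPartitionSeq_of_mem_interlacing hlam hm), Finset.sum_mul]
  exact Finset.sum_bij' (fun T hT ↦ T.restrict (Finset.mem_filter.1 hT).2)
    (fun T _ ↦ T.extend hlam hm hab)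
    (fun _ _ ↦ Finset.mem_univ _)
    (fun T _ ↦ Finset.mem_filter.2 ⟨Finset.mem_univ _, T.rowCounts_extend hlam hm hab⟩)
    (fun T _ ↦ T.extend_restrict hlam hm hab _)
    (fun T _ ↦ T.restrict_extend hlam hm hab)
    (fun T _ ↦ T.weight_eq_weight_restrict_mul hlam _)

theorem schur_succ_succ_eq_sum {n : ℕ} (hlam : IsPartitionSeq (n + 1) lam) :
    schur (n + 1) lam 1 (n + 1) =
      ∑ m ∈ Fintype.piFinset (fun i : Fin n ↦ Finset.Icc (lam (i + 1)) (lam i)),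
        schur n (zeroExtend n m) 1 n *
          ((∏ i : Fin n, MvPolynomial.X (n + 1) ^ (lam i - m i).toNat) *
            MvPolynomial.X (n + 1) ^ (lam n).toNat) := by
  rw [schur_succ_eq_sum_interlacing hlam (by omega)]
  symm
  refine Finset.sum_of_injOn (fun m ↦ Fin.snoc m 0)
    (fun m _ m' _ h ↦ (Fin.snoc_injective2 h).1)
    (fun m hm ↦ (snoc_zero_mem_interlacing hlam).2 (Fintype.mem_piFinset.1 hm)) ?_ ?_
  · intro m hm hm'
    have hm_last : 0 < m (Fin.last n) := by
      have h₀ := (mem_interlacing.1 hm (Fin.last n)).1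
      rw [zeroExtend_of_le _ (by simp)] at h₀
      refine h₀.lt_of_ne fun h ↦ hm' ⟨Fin.init m, ?_, ?_⟩
      · rw [← Fin.snoc_init_self m, ← h, snoc_zero_mem_interlacing hlam] at hm
        exact Finset.mem_coe.2 (Fintype.mem_piFinset.2 hm)
      · exact h ▸ Fin.snoc_init_self m
    rw [schur_eq_zero_of_lt_add (isPartitionSeq_of_mem_interlacing hlam hm) n.lt_succ_self
      (by rwa [zeroExtend_of_lt m n.lt_succ_self]) (by omega), zero_mul]
  · intro m hm
    have m_partition := isPartitionSeq_of_forall_mem_Icc hlam (Fintype.mem_piFinset.1 hm)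
    rw [zeroExtend_snoc_zero, Fin.prod_univ_castSucc, ← schur_zeroExtend n.le_succ m_partition]
    simp

end Branching

section Determinant

variable {ι R : Type*} [Fintype ι] [DecidableEq ι] [CommRing R]

theorem det_of_sum_row {α : Type*} (s : ι → Finset α) (f : ι → α → ι → R) :
    (Matrix.of fun j i ↦ ∑ m ∈ s j, f j m i).det =
      ∑ m ∈ Fintype.piFinset s, (Matrix.of fun j i ↦ f j (m j) i).det := by
  have rows : (Matrix.of fun j i ↦ ∑ m ∈ s j, f j m i) = fun j ↦ ∑ m ∈ s j, f j m :=
    funext₂ fun j i ↦ (Finset.sum_apply i (s j) (f j)).symm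
  rw [rows]
  exact Matrix.detRowAlternating.toMultilinearMap.map_sum_finset f s

theorem sum_det_updateRow_mul (M : Matrix ι ι R) (d : ι → R) :
    ∑ i, (M.updateRow i fun j ↦ M i j * d j).det = (∑ j, d j) * M.det := by
  have expand (i : ι) : (M.updateRow i fun j ↦ M i j * d j).det =
      ∑ j, d j * (M.adjugate j i * M i j) := by
    rw [← Matrix.cramer_transpose_apply, Matrix.cramer_eq_adjugate_mulVec,
      ← Matrix.adjugate_transpose, Matrix.mulVec, dotProduct]
    exact Finset.sum_congr rfl fun j _ ↦ by rw [Matrix.transpose_apply]; ring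
  simp_rw [expand]
  rw [Finset.sum_comm, Finset.sum_mul]
  refine Finset.sum_congr rfl fun j _ ↦ ?_
  rw [← Finset.mul_sum, ← Matrix.mul_apply, Matrix.adjugate_mul]
  simp

theorem det_smul_eq_sum_det_updateRow_smul (M : Matrix ι ι R) (a : ι → R) :
    M.det • a = ∑ j, (M.updateRow j a).det • M.row j := by
  rw [← Matrix.det_transpose, ← Matrix.mulVec_cramer]
  ext i
  simp [Matrix.mulVec, dotProduct, Matrix.cramer_transpose_apply, Finset.sum_apply, mul_comm]

theorem det_updateRow_updateRow_swap (M : Matrix ι ι R) {s t : ι} (hst : s ≠ t) (b : ι → R) :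
    ((M.updateRow s b).updateRow t (M.row s)).det = -(M.updateRow t b).det := by
  have swap : (M.updateRow s b).updateRow t (M.row s) =
      (M.updateRow t b).submatrix (Equiv.swap s t) id := by
    ext i j
    simp only [Matrix.updateRow_apply, Matrix.row_apply, Matrix.submatrix_apply, id,
      Equiv.swap_apply_def]
    grind
  rw [swap, Matrix.det_permute, Equiv.Perm.sign_swap hst]
  simp

-- The three-term Plücker relation: Cramer expansion writes `det M • a` in the rows of `M`, and only
-- rows `s` and `t` survive once it is put in row `t` of `M.updateRow s b`.
theorem det_mul_det_updateRow_updateRow (M : Matrix ι ι R) {s t : ι} (hst : s ≠ t)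
    (a b : ι → R) :
    M.det * ((M.updateRow s b).updateRow t a).det =
      (M.updateRow t a).det * (M.updateRow s b).det -
        (M.updateRow s a).det * (M.updateRow t b).det := by
  have linear (f : ι → ι → R) : ((M.updateRow s b).updateRow t (∑ j, f j)).det =
      ∑ j, ((M.updateRow s b).updateRow t (f j)).det :=
    Matrix.detRowAlternating.toMultilinearMap.map_update_sum Finset.univ t f (M.updateRow s b)
  rw [← Matrix.det_updateRow_smul, det_smul_eq_sum_det_updateRow_smul, linear,
    ← Finset.sum_subset (Finset.subset_univ {t, s}), Finset.sum_pair hst.symm]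
  · have row_t : (M.updateRow s b).updateRow t (M.row t) = M.updateRow s b := by
      ext i j
      simp only [Matrix.updateRow_apply, Matrix.row_apply]
      grind
    rw [Matrix.det_updateRow_smul, Matrix.det_updateRow_smul, row_t,
      det_updateRow_updateRow_swap M hst]
    ring
  · intro j _ hj
    simp only [Finset.mem_insert, Finset.mem_singleton, not_or] at hj
    have rows_eq : ((M.updateRow s b).updateRow t (M.row j)).det = 0 :=
      Matrix.det_zero_of_row_eq (Ne.symm hj.1)
        (by rw [Matrix.updateRow_self, Matrix.updateRow_ne hj.1, Matrix.updateRow_ne hj.2]; rfl)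
    rw [Matrix.det_updateRow_smul, rows_eq, mul_zero]

theorem det_eq_of_forall_row_eq_smul_add_succ {n : ℕ}
    {A B : Matrix (Fin (n + 1)) (Fin (n + 1)) R} (c : Fin n → R)
    (A_last : ∀ j, A (Fin.last n) j = B (Fin.last n) j)
    (A_castSucc : ∀ (i : Fin n) (j), A i.castSucc j = B i.castSucc j + c i * A i.succ j) :
    A.det = B.det := by
  rw [← Matrix.det_submatrix_equiv_self Fin.revPerm A,
    ← Matrix.det_submatrix_equiv_self Fin.revPerm B]
  refine Matrix.det_eq_of_forall_row_eq_smul_add_pred (fun i ↦ c i.rev) ?_ ?_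
  · simp [A_last]
  · simp [A_castSucc, Fin.rev_succ, Fin.rev_castSucc]

theorem det_eq_mul_det_of_last_column {n : ℕ} {A : Matrix (Fin (n + 1)) (Fin (n + 1)) R}
    (hA : ∀ j : Fin n, A j.castSucc (Fin.last n) = 0) :
    A.det = A (Fin.last n) (Fin.last n) * (A.submatrix Fin.castSucc Fin.castSucc).det := by
  rw [Matrix.det_succ_column A (Fin.last n), Fin.sum_univ_castSucc]
  simp [hA, Fin.succAbove_last, Even.neg_one_pow ⟨n, rfl⟩]

end Determinant

theorem zpow_sub_zpow_mul_zpow_eq_sum {K : Type*} [Field K] {y z : K} (hy : y ≠ 0) (hz : z ≠ 0)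
    {a b : ℤ} (hab : a ≤ b) :
    y ^ (b + 1) - z ^ (b + 1 - a) * y ^ a =
      (y - z) * ∑ m ∈ Finset.Icc a b, z ^ (b - m) * y ^ m := by
  induction b, hab using Int.leInduction with
  | base =>
    simp only [Finset.Icc_self, Finset.sum_singleton, sub_self, zpow_zero, add_sub_cancel_left,
      zpow_one, zpow_add_one₀ hy]
    ring
  | succ b hb ih =>
    have Icc_succ : Finset.Icc a (b + 1) = insert (b + 1) (Finset.Icc a b) := by
      ext m
      simp only [Finset.mem_Icc, Finset.mem_insert]
      omega
    have sum_eq : ∑ m ∈ Finset.Icc a b, z ^ (b + 1 - m) * y ^ m =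
        z * ∑ m ∈ Finset.Icc a b, z ^ (b - m) * y ^ m := by
      rw [Finset.mul_sum]
      refine Finset.sum_congr rfl fun m _ ↦ ?_
      rw [show b + 1 - m = (b - m) + 1 by ring, zpow_add_one₀ hz]
      ring
    rw [Icc_succ, Finset.sum_insert (by simp), sum_eq, sub_self, zpow_zero, mul_add,
      mul_left_comm (y - z) z, ← ih, zpow_add_one₀ hy (b + 1),
      show b + 1 + 1 - a = (b + 1 - a) + 1 by ring, zpow_add_one₀ hz]
    ring

/-- The exponents `δ = (n - 1, n - 2, …, 1, 0)` of the Vandermonde determinant. -/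
def staircase (n : ℕ) : ℕ → ℤ := fun j ↦ n - 1 - j

/-- The alternant `det (x_i ^ l_j)` in the variables `x 1, …, x n` with exponents
`l 0, …, l (n - 1)`. The exponents may be negative. -/
noncomputable def alternant {K : Type*} [Field K] (x : ℕ → K) (n : ℕ) (l : ℕ → ℤ) : K :=
  (Matrix.of fun j i : Fin n ↦ x (i + 1) ^ l j).det

section Alternant

variable {K : Type*} [Field K] {x : ℕ → K} {n : ℕ} {l l' : ℕ → ℤ}

theorem alternant_congr (h : ∀ j < n, l j = l' j) : alternant x n l = alternant x n l' := by
  simp only [alternant, h _ (Fin.is_lt _)]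

theorem alternant_eq_zero {i j : ℕ} (hi : i < n) (hj : j < n) (hij : i ≠ j) (h : l i = l j) :
    alternant x n l = 0 :=
  Matrix.det_zero_of_row_eq (i := ⟨i, hi⟩) (j := ⟨j, hj⟩) (mt Fin.mk.inj hij)
    (funext fun c ↦ by simp [h])

theorem of_zpow_update (x : ℕ → K) (l : ℕ → ℤ) (j : Fin n) (v : ℤ) :
    (Matrix.of fun i c : Fin n ↦ x (c + 1) ^ Function.update l j v i) =
      (Matrix.of fun i c : Fin n ↦ x (c + 1) ^ l i).updateRow j fun c ↦ x (c + 1) ^ v := by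
  ext i c
  simp only [Matrix.of_apply, Matrix.updateRow_apply, Function.update_apply, Fin.val_inj]
  split_ifs <;> rfl

theorem sum_alternant_update_sub_one (hx : ∀ i, x i ≠ 0) (n : ℕ) (l : ℕ → ℤ) :
    ∑ j ∈ Finset.range n, alternant x n (Function.update l j (l j - 1)) =
      (∑ i : Fin n, (x (i + 1))⁻¹) * alternant x n l := by
  rw [Finset.sum_range, alternant, ← sum_det_updateRow_mul]
  refine Finset.sum_congr rfl fun j _ ↦ ?_
  rw [alternant, of_zpow_update]
  simp only [zpow_sub_one₀ (hx _), Matrix.of_apply]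

theorem alternant_add_one (hx : ∀ i, x i ≠ 0) (n : ℕ) (l : ℕ → ℤ) :
    alternant x n (fun j ↦ l j + 1) = (∏ i : Fin n, x (i + 1)) * alternant x n l := by
  rw [alternant, alternant, ← Matrix.det_mul_row]
  simp only [Matrix.of_apply, zpow_add_one₀ (hx _), mul_comm]

theorem alternant_mul_alternant_update_update (x : ℕ → K) (l : ℕ → ℤ) {s t : ℕ} (hs : s < n)
    (ht : t < n) (hst : s ≠ t) (a b : ℤ) :
    alternant x n l * alternant x n (Function.update (Function.update l s b) t a) =
      alternant x n (Function.update l t a) * alternant x n (Function.update l s b) -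
        alternant x n (Function.update l s a) * alternant x n (Function.update l t b) := by
  lift s to Fin n using hs
  lift t to Fin n using ht
  simp only [alternant, of_zpow_update]
  exact det_mul_det_updateRow_updateRow _ (by simpa [Fin.val_inj] using hst) _ _

theorem alternant_succ_eq_mul_det (hx : ∀ i, x i ≠ 0) (l : ℕ → ℤ) :
    alternant x (n + 1) l = x (n + 1) ^ l n * (Matrix.of fun j i : Fin n ↦
      x (i + 1) ^ l j - x (n + 1) ^ (l j - l (j + 1)) * x (i + 1) ^ l (j + 1)).det := by
  let B : Matrix (Fin (n + 1)) (Fin (n + 1)) K := Matrix.of fun j i ↦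
    if (j : ℕ) < n then x (i + 1) ^ l j - x (n + 1) ^ (l j - l (j + 1)) * x (i + 1) ^ l (j + 1)
    else x (i + 1) ^ l j
  have row_ops : alternant x (n + 1) l = B.det :=
    det_eq_of_forall_row_eq_smul_add_succ (fun j : Fin n ↦ x (n + 1) ^ (l j - l (j + 1)))
      (by simp [B]) (by simp [B])
  have last_column (j : Fin n) : B j.castSucc (Fin.last n) = 0 := by
    simp [B, ← zpow_add₀ (hx (n + 1))]
  rw [row_ops, det_eq_mul_det_of_last_column last_column]
  congr 2
  · simp [B]
  · ext j i
    simp [B]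

theorem zpow_add_staircase_sub_eq_mul_sum {y z : K} (hy : y ≠ 0) (hz : z ≠ 0) (n : ℕ)
    {lam : ℕ → ℤ} {j : ℕ} (hlam : lam (j + 1) ≤ lam j) :
    y ^ (lam + staircase (n + 1)) j -
        z ^ ((lam + staircase (n + 1)) j - (lam + staircase (n + 1)) (j + 1)) *
          y ^ (lam + staircase (n + 1)) (j + 1) =
      (y - z) * ∑ m ∈ Finset.Icc (lam (j + 1)) (lam j),
        z ^ (lam j - m) * y ^ (m + staircase n j) := by
  have exponent : (lam + staircase (n + 1)) j = lam j + 1 + staircase n j := by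
    simp only [Pi.add_apply, staircase]
    push_cast
    ring
  have exponent_succ : (lam + staircase (n + 1)) (j + 1) = lam (j + 1) + staircase n j := by
    simp only [Pi.add_apply, staircase]
    push_cast
    ring
  simp_rw [exponent, exponent_succ, add_sub_add_right_eq_sub, zpow_add₀ hy _ (staircase n j),
    ← mul_assoc, ← Finset.sum_mul, ← mul_assoc, ← zpow_sub_zpow_mul_zpow_eq_sum hy hz hlam,
    sub_mul]

theorem det_of_mul_zpow_add_staircase (c : Fin n → K) (m : Fin n → ℤ) :
    (Matrix.of fun j i : Fin n ↦ c j * x (i + 1) ^ (m j + staircase n j)).det =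
      (∏ j, c j) * alternant x n (zeroExtend n m + staircase n) := by
  rw [alternant, ← Matrix.det_mul_column]
  simp only [Matrix.of_apply, Pi.add_apply, zeroExtend_val]

theorem alternant_succ (hx : ∀ i, x i ≠ 0) {lam : ℕ → ℤ} (hlam : ∀ i < n, lam (i + 1) ≤ lam i) :
    alternant x (n + 1) (lam + staircase (n + 1)) = (∏ i : Fin n, (x (i + 1) - x (n + 1))) *
      ∑ m ∈ Fintype.piFinset (fun i : Fin n ↦ Finset.Icc (lam (i + 1)) (lam i)),
        alternant x n (zeroExtend n m + staircase n) *
          ((∏ i : Fin n, x (n + 1) ^ (lam i - m i)) * x (n + 1) ^ lam n) := by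
  have exponent_last : (lam + staircase (n + 1)) n = lam n := by simp [staircase]
  have factor := Matrix.det_mul_row (fun i : Fin n ↦ x (i + 1) - x (n + 1))
    (Matrix.of fun j i : Fin n ↦ ∑ m ∈ Finset.Icc (lam (j + 1)) (lam j),
      x (n + 1) ^ (lam j - m) * x (i + 1) ^ (m + staircase n j))
  simp only [Matrix.of_apply] at factor
  simp only [alternant_succ_eq_mul_det hx, exponent_last,
    zpow_add_staircase_sub_eq_mul_sum (hx _) (hx _) n (hlam _ (Fin.is_lt _))]
  rw [factor, det_of_sum_row, mul_left_comm, Finset.mul_sum]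
  congr 1
  refine Finset.sum_congr rfl fun m _ ↦ ?_
  rw [det_of_mul_zpow_add_staircase (fun j ↦ x (n + 1) ^ (lam j - m j))]
  ring

theorem alternant_staircase_succ (hx : ∀ i, x i ≠ 0) (n : ℕ) :
    alternant x (n + 1) (staircase (n + 1)) =
      (∏ i : Fin n, (x (i + 1) - x (n + 1))) * alternant x n (staircase n) := by
  have zero_add_staircase (n : ℕ) : zeroExtend n (fun _ ↦ 0) + staircase n = staircase n := by
    funext j
    simp [zeroExtend]
  have branch := alternant_succ (n := n) hx (lam := 0) fun _ _ ↦ le_rfl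
  simpa [Fintype.piFinset_singleton, zero_add_staircase] using branch

theorem alternant_staircase_ne_zero (hx : ∀ i, x i ≠ 0) (hinj : Function.Injective x) (n : ℕ) :
    alternant x n (staircase n) ≠ 0 := by
  induction n with
  | zero => simp [alternant]
  | succ n ih =>
    rw [alternant_staircase_succ hx]
    refine mul_ne_zero (Finset.prod_ne_zero_iff.2 fun i _ ↦ sub_ne_zero.2 fun h ↦ ?_) ih
    have := hinj h
    have := i.2
    omega

end Alternant

section Stability

variable {k n N a : ℕ} {lam : ℕ → ℤ}

/-- The substitution `x_i = 0` for all `i > n`. -/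
noncomputable def truncateVars (n : ℕ) : MvPolynomial ℕ ℤ →ₐ[ℤ] MvPolynomial ℕ ℤ :=
  MvPolynomial.aeval fun i ↦ if i ≤ n then MvPolynomial.X i else 0

theorem truncateVars_X (n i : ℕ) :
    truncateVars n (MvPolynomial.X i) = if i ≤ n then MvPolynomial.X i else 0 :=
  MvPolynomial.aeval_X _ i

theorem truncateVars_schur_self (n k : ℕ) (lam : ℕ → ℤ) (a : ℕ) :
    truncateVars n (schur k lam a n) = schur k lam a n := by
  by_cases hlam : IsPartitionSeq k lam
  · rw [schur_eq_sum_weight a n hlam, map_sum]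
    refine Finset.sum_congr rfl fun T _ ↦ ?_
    simp only [SSYT.weight, map_prod, truncateVars_X, if_pos (T.entry_le _ _)]
  · rw [schur_eq_zero_of_not_isPartitionSeq a n hlam, map_zero]

theorem truncateVars_schur_succ (hnN : n ≤ N) (ha : a ≤ N + 1) :
    truncateVars n (schur k lam a (N + 1)) = truncateVars n (schur k lam a N) := by
  by_cases hlam : IsPartitionSeq k lam
  · rw [schur_succ_eq_sum_interlacing hlam ha, map_sum,
      Finset.sum_eq_single (fun i : Fin k ↦ lam i)]
    · simp [schur_zeroExtend le_rfl hlam]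
    · intro m hm hne
      obtain ⟨i, hi⟩ := Function.ne_iff.1 hne
      have hlt : m i < lam i := lt_of_le_of_ne (mem_interlacing.1 hm i).2 hi
      rw [map_mul, map_prod, Finset.prod_eq_zero (Finset.mem_univ i), mul_zero]
      rw [map_pow, truncateVars_X, if_neg (by omega), zero_pow (by omega)]
    · exact fun h ↦ absurd (mem_interlacing_self hlam) h
  · simp only [schur_eq_zero_of_not_isPartitionSeq _ _ hlam]

theorem truncateVars_schur (hnN : n ≤ N) (ha : a ≤ n + 1) :
    truncateVars n (schur k lam a N) = schur k lam a n := by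
  induction N, hnN using Nat.le_induction with
  | base => exact truncateVars_schur_self n k lam a
  | succ N hnN ih => rw [truncateVars_schur_succ hnN (by omega), ih]

theorem truncateVars_schurSkew1 (hnN : n ≤ N) (ha : a ≤ n + 1) :
    truncateVars n (schurSkew1 k lam a N) = schurSkew1 k lam a n := by
  simp only [schurSkew1, map_sum, truncateVars_schur hnN ha]

end Stability

section Bialternant

variable {K : Type*} [Field K] {x : ℕ → K} {k n : ℕ} {lam : ℕ → ℤ}

theorem aeval_schur_self_mul_alternant_staircase (hx : ∀ i, x i ≠ 0)
    (hlam : IsPartitionSeq n lam) :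
    MvPolynomial.aeval x (schur n lam 1 n) * alternant x n (staircase n) =
      alternant x n (lam + staircase n) := by
  induction n generalizing lam with
  | zero => simp [schur_zero, alternant]
  | succ n ih =>
    rw [alternant_succ hx fun i hi ↦ hlam.1 i (by omega), alternant_staircase_succ hx,
      schur_succ_succ_eq_sum hlam, map_sum, Finset.sum_mul, Finset.mul_sum]
    refine Finset.sum_congr rfl fun m hm ↦ ?_
    have m_interlaces := Fintype.mem_piFinset.1 hm
    have pow_eq {c : ℤ} (hc : 0 ≤ c) : x (n + 1) ^ c.toNat = x (n + 1) ^ c := by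
      rw [← zpow_natCast, Int.toNat_of_nonneg hc]
    have aeval_monomial : MvPolynomial.aeval x
        ((∏ i : Fin n, MvPolynomial.X (R := ℤ) (n + 1) ^ (lam i - m i).toNat) *
          MvPolynomial.X (n + 1) ^ (lam n).toNat) =
        (∏ i : Fin n, x (n + 1) ^ (lam i - m i)) * x (n + 1) ^ lam n := by
      simp only [map_mul, map_prod, map_pow, MvPolynomial.aeval_X]
      rw [pow_eq (hlam.2 n n.lt_succ_self), Finset.prod_congr rfl fun i _ ↦
        pow_eq (sub_nonneg.2 (Finset.mem_Icc.1 (m_interlaces i)).2)]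
    rw [← ih (isPartitionSeq_of_forall_mem_Icc hlam m_interlaces), map_mul, aeval_monomial]
    ring

theorem aeval_schur_mul_alternant_staircase (hx : ∀ i, x i ≠ 0) (hkn : k ≤ n)
    (hlam : IsPartitionSeq k lam) :
    MvPolynomial.aeval x (schur k lam 1 n) * alternant x n (staircase n) =
      alternant x n (zeroExtend k (lam ·) + staircase n) := by
  rw [← schur_zeroExtend hkn hlam, aeval_schur_self_mul_alternant_staircase hx (hlam.zeroExtend n)]

theorem zeroExtend_succ_eq_of_not_isPartitionSeq_update (hlam : IsPartitionSeq k lam) {i : ℕ}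
    (hi : i < k) (h : ¬IsPartitionSeq k (Function.update lam i (lam i - 1))) :
    zeroExtend k (lam ·) (i + 1) = lam i := by
  by_contra hne
  have succ_le : zeroExtend k (lam ·) (i + 1) ≤ lam i := by
    simpa [zeroExtend_of_lt _ hi] using (hlam.zeroExtend (i + 2)).1 i (by omega)
  have succ_nonneg := (hlam.zeroExtend (i + 2)).2 (i + 1) (by omega)
  refine h ⟨fun j hj ↦ ?_, fun j hj ↦ ?_⟩
  · have := hlam.1 j hj
    simp only [Function.update_apply]
    grind [zeroExtend]
  · have := hlam.2 j hj
    simp only [Function.update_apply]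
    grind

theorem aeval_schur_update_mul_alternant_staircase (hx : ∀ i, x i ≠ 0) (hkn : k < n)
    (hlam : IsPartitionSeq k lam) {i : ℕ} (hi : i < k) :
    MvPolynomial.aeval x (schur k (Function.update lam i (lam i - 1)) 1 n) *
        alternant x n (staircase n) =
      alternant x n (Function.update (zeroExtend k (lam ·) + staircase n) i
        ((zeroExtend k (lam ·) + staircase n) i - 1)) := by
  by_cases hp : IsPartitionSeq k (Function.update lam i (lam i - 1))
  · rw [aeval_schur_mul_alternant_staircase hx hkn.le hp]
    refine alternant_congr fun j _ ↦ ?_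
    simp only [Function.update_apply, Pi.add_apply, zeroExtend]
    grind
  · rw [schur_eq_zero_of_not_isPartitionSeq _ _ hp, map_zero, zero_mul]
    refine (alternant_eq_zero (i := i) (j := i + 1) (by omega) (by omega) (by omega) ?_).symm
    have succ_eq := zeroExtend_succ_eq_of_not_isPartitionSeq_update hlam hi hp
    rw [Function.update_self, Function.update_of_ne (by omega), Pi.add_apply, Pi.add_apply,
      succ_eq, zeroExtend_of_lt _ hi]
    simp only [staircase]
    push_cast
    ring

theorem aeval_schurSkew1_mul_alternant_staircase (hx : ∀ i, x i ≠ 0) (hkn : k < n)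
    (hlam : IsPartitionSeq k lam) :
    MvPolynomial.aeval x (schurSkew1 k lam 1 n) * alternant x n (staircase n) =
      (∑ i : Fin n, (x (i + 1))⁻¹) * alternant x n (zeroExtend k (lam ·) + staircase n) -
        alternant x n (Function.update (zeroExtend k (lam ·) + staircase n) (n - 1) (-1)) := by
  set l := zeroExtend k (lam ·) + staircase n with hl
  have l_of_le {i : ℕ} (hi : k ≤ i) : l i = n - 1 - i := by
    simp [hl, zeroExtend_of_le _ hi, staircase]
  have empty_rows : ∑ i ∈ Finset.Ico k n, alternant x n (Function.update l i (l i - 1)) =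
      alternant x n (Function.update l (n - 1) (-1)) := by
    rw [Finset.sum_eq_single_of_mem (n - 1) (Finset.mem_Ico.2 (by omega))]
    · rw [l_of_le (by omega)]
      congr 2
      omega
    · intro i hi hne
      rw [Finset.mem_Ico] at hi
      refine alternant_eq_zero (i := i) (j := i + 1) (by omega) (by omega) (by omega) ?_
      rw [Function.update_self, Function.update_of_ne (by omega), l_of_le (by omega),
        l_of_le (by omega)]
      push_cast
      ring
  rw [← sum_alternant_update_sub_one hx, ← Finset.sum_range_add_sum_Ico _ hkn.le, empty_rows,
    add_sub_cancel_right, schurSkew1, map_sum, Finset.sum_mul]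
  exact Finset.sum_congr rfl fun i hi ↦
    aeval_schur_update_mul_alternant_staircase hx hkn hlam (Finset.mem_range.1 hi)

end Bialternant

/-- The cyclic permutation `i ↦ i + 1 ↦ ⋯ ↦ j ↦ i` of the natural numbers, for `i ≤ j`. -/
def natCycle (i j a : ℕ) : ℕ := if a < i ∨ j < a then a else if a = j then i else a + 1

theorem val_cycleIcc {n : ℕ} [NeZero n] {i j : Fin n} (hij : i ≤ j) (a : Fin n) :
    (Fin.cycleIcc i j a : ℕ) = natCycle i j a := by
  rcases lt_or_ge a i with hai | hia
  · simp [Fin.cycleIcc_of_lt hai, natCycle, hai]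
  rcases lt_trichotomy a j with haj | rfl | hja
  · rw [Fin.cycleIcc_of_ge_of_lt hia haj, Fin.val_add_one_of_lt' (by omega)]
    grind [natCycle]
  · rw [Fin.cycleIcc_of_last hij]
    grind [natCycle]
  · simp [Fin.cycleIcc_of_gt hja, natCycle, hja]

theorem alternant_comp_natCycle {K : Type*} [Field K] (x : ℕ → K) {n : ℕ} (l : ℕ → ℤ) {i j : ℕ}
    (hij : i ≤ j) (hj : j < n) :
    alternant x n (l ∘ natCycle i j) = (-1) ^ (j - i) * alternant x n l := by
  have : NeZero n := ⟨by omega⟩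
  lift j to Fin n using hj
  lift i to Fin n using by omega
  have permuted : (Matrix.of fun a c : Fin n ↦ x (c + 1) ^ (l ∘ natCycle i j) a) =
      (Matrix.of fun a c : Fin n ↦ x (c + 1) ^ l a).submatrix (Fin.cycleIcc i j) id := by
    ext a c
    simp [val_cycleIcc hij]
  rw [alternant, permuted, Matrix.det_permute, Fin.sign_cycleIcc_of_le hij]
  simp [alternant]

/-- For a partition `lam` with beta-numbers `lam j - j`, the sequence of parts whose beta-numbers
are those of `lam` with the `t`-th one omitted. In the notation of the theorem this is `μ`, and
`ν` is `μ + 1`. -/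
def eraseRow (t : ℕ) (lam : ℕ → ℤ) : ℕ → ℤ := fun j ↦ if j < t then lam j else lam (j + 1) - 1

theorem isPartitionSeq_eraseRow {k : ℕ} {lam : ℕ → ℤ} (t : ℕ)
    (hlam : IsPartitionSeq (k + 1) (fun j ↦ lam j - 1)) : IsPartitionSeq k (eraseRow t lam) := by
  constructor
  · intro i hi
    have := hlam.1 i (by omega)
    have := hlam.1 (i + 1) (by omega)
    grind [eraseRow]
  · intro i hi
    have := hlam.2 i (by omega)
    have := hlam.2 (i + 1) (by omega)
    grind [eraseRow]

section EraseRow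

variable {K : Type*} [Field K] {x : ℕ → K} {k t n : ℕ} {lam : ℕ → ℤ}

theorem alternant_eraseRow (x : ℕ → K) (lam : ℕ → ℤ) (ht : t ≤ k) (hkn : k < n) :
    alternant x n (zeroExtend k (eraseRow t lam ·) + staircase n) = (-1) ^ (k - t) *
      alternant x n (Function.update (zeroExtend (k + 1) (lam ·) + staircase n) t (n - 1 - k)) := by
  rw [← alternant_comp_natCycle x _ ht hkn]
  refine alternant_congr fun j _ ↦ ?_
  simp only [Pi.add_apply, Function.comp_apply, Function.update_apply, zeroExtend, eraseRow,
    natCycle, staircase]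
  grind

theorem alternant_update_eraseRow (x : ℕ → K) (lam : ℕ → ℤ) (ht : t ≤ k) (hkn : k + 1 < n) :
    alternant x n (Function.update (zeroExtend k (eraseRow t lam ·) + staircase n) (n - 1) (-1)) =
      (-1) ^ (k - t) * alternant x n (Function.update (Function.update
        (zeroExtend (k + 1) (lam ·) + staircase n) (n - 1) (-1)) t (n - 1 - k)) := by
  rw [← alternant_comp_natCycle x _ ht (by omega : k < n)]
  refine alternant_congr fun j _ ↦ ?_
  simp only [Pi.add_apply, Function.comp_apply, Function.update_apply, zeroExtend, eraseRow,
    natCycle, staircase]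
  grind

theorem alternant_eraseRow_add_one (hx : ∀ i, x i ≠ 0) (lam : ℕ → ℤ) (ht : t ≤ k)
    (hkn : k < n) :
    alternant x n (zeroExtend k (fun j ↦ eraseRow t lam j + 1) + staircase n) =
      (∏ i : Fin n, x (i + 1)) * ((-1) ^ (n - 1 - t) *
        alternant x n (Function.update (zeroExtend (k + 1) (lam ·) + staircase n) t (-1))) := by
  rw [← alternant_comp_natCycle x _ (by omega : t ≤ n - 1) (by omega), ← alternant_add_one hx]
  refine alternant_congr fun j _ ↦ ?_
  simp only [Pi.add_apply, Function.comp_apply, Function.update_apply, zeroExtend, eraseRow,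
    natCycle, staircase]
  grind

theorem alternant_update_last (hx : ∀ i, x i ≠ 0) (lam : ℕ → ℤ) (hkn : k < n) :
    alternant x n (Function.update (zeroExtend k (lam ·) + staircase n) (n - 1) (n - k)) =
      (-1) ^ (n - 1 - k) * ((∏ i : Fin n, x (i + 1)) *
        alternant x n (zeroExtend k (fun j ↦ lam j - 1) + staircase n)) := by
  rw [← alternant_add_one hx, ← alternant_comp_natCycle x _ (by omega : k ≤ n - 1) (by omega)]
  refine alternant_congr fun j _ ↦ ?_
  simp only [Pi.add_apply, Function.comp_apply, Function.update_apply, zeroExtend, natCycle,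
    staircase]
  grind

theorem alternant_update_eraseRow_mul_alternant (hx : ∀ i, x i ≠ 0) (lam : ℕ → ℤ) (ht : t ≤ k)
    (hkn : k + 1 < n) :
    alternant x n (Function.update (zeroExtend k (eraseRow t lam ·) + staircase n) (n - 1) (-1)) *
        alternant x n (zeroExtend (k + 1) (lam ·) + staircase n) =
      alternant x n (Function.update (zeroExtend (k + 1) (lam ·) + staircase n) (n - 1) (-1)) *
          alternant x n (zeroExtend k (eraseRow t lam ·) + staircase n) +
        alternant x n (zeroExtend (k + 1) (fun j ↦ lam j - 1) + staircase n) *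
          alternant x n (zeroExtend k (fun j ↦ eraseRow t lam j + 1) + staircase n) := by
  have plucker := alternant_mul_alternant_update_update x
    (zeroExtend (k + 1) (lam ·) + staircase n) (by omega : n - 1 < n) (by omega : t < n) (by omega)
    (n - 1 - k) (-1)
  have rho := alternant_update_last hx lam hkn
  rw [Nat.cast_succ, show (n : ℤ) - (k + 1) = n - 1 - k by ring] at rho
  have sign : (-1 : K) ^ (n - 1 - t) = -((-1) ^ (k - t) * (-1) ^ (n - 1 - (k + 1))) := by
    rw [show n - 1 - t = (k - t) + (n - 1 - (k + 1)) + 1 by omega, pow_succ, pow_add]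
    ring
  rw [alternant_update_eraseRow x lam ht hkn, alternant_eraseRow x lam ht (by omega),
    alternant_eraseRow_add_one hx lam ht (by omega), sign]
  rw [rho] at plucker
  linear_combination (-1 : K) ^ (k - t) * plucker

end EraseRow

section Identity

variable {k t n : ℕ} {lam : ℕ → ℤ}

theorem aeval_schurSkew1_mul_aeval_schur_eraseRow {K : Type*} [Field K] {x : ℕ → K}
    (hx : ∀ i, x i ≠ 0) (hinj : Function.Injective x) (ht : t ≤ k) (hkn : k + 1 < n)
    (hlam : IsPartitionSeq (k + 1) fun j ↦ lam j - 1) :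
    MvPolynomial.aeval x (schurSkew1 (k + 1) lam 1 n) *
        MvPolynomial.aeval x (schur k (eraseRow t lam) 1 n) =
      MvPolynomial.aeval x (schurSkew1 k (eraseRow t lam) 1 n) *
          MvPolynomial.aeval x (schur (k + 1) lam 1 n) +
        MvPolynomial.aeval x (schur (k + 1) (fun j ↦ lam j - 1) 1 n) *
          MvPolynomial.aeval x (schur k (fun j ↦ eraseRow t lam j + 1) 1 n) := by
  have lam_partition : IsPartitionSeq (k + 1) lam := by simpa using hlam.add_one
  have mu_partition := isPartitionSeq_eraseRow t hlam
  have skew_lam := aeval_schurSkew1_mul_alternant_staircase hx hkn lam_partition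
  have skew_mu := aeval_schurSkew1_mul_alternant_staircase hx (by omega : k < n) mu_partition
  have schur_lam := aeval_schur_mul_alternant_staircase hx hkn.le lam_partition
  have schur_mu := aeval_schur_mul_alternant_staircase hx (by omega : k ≤ n) mu_partition
  have schur_nu := aeval_schur_mul_alternant_staircase hx (by omega : k ≤ n) mu_partition.add_one
  have schur_rho := aeval_schur_mul_alternant_staircase hx hkn.le hlam
  have relation := alternant_update_eraseRow_mul_alternant hx lam ht hkn
  have vandermonde_ne_zero := alternant_staircase_ne_zero hx hinj n
  refine mul_right_cancel₀ (mul_ne_zero vandermonde_ne_zero vandermonde_ne_zero) ?_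
  rw [add_mul, mul_mul_mul_comm, skew_lam, schur_mu, mul_mul_mul_comm, skew_mu, schur_lam,
    mul_mul_mul_comm, schur_rho, schur_nu]
  linear_combination relation

theorem schurSkew1_mul_schur_eraseRow_of_lt (ht : t ≤ k) (hkn : k + 1 < n)
    (hlam : IsPartitionSeq (k + 1) fun j ↦ lam j - 1) :
    schurSkew1 (k + 1) lam 1 n * schur k (eraseRow t lam) 1 n =
      schurSkew1 k (eraseRow t lam) 1 n * schur (k + 1) lam 1 n +
        schur (k + 1) (fun j ↦ lam j - 1) 1 n * schur k (fun j ↦ eraseRow t lam j + 1) 1 n := by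
  obtain ⟨K, _, f, f_injective⟩ :
      ∃ (K : Type) (_ : Field K) (f : MvPolynomial ℕ ℤ →+* K), Function.Injective f :=
    ⟨FractionRing (MvPolynomial ℕ ℤ), inferInstance, algebraMap _ _,
      IsFractionRing.injective (MvPolynomial ℕ ℤ) _⟩
  have X_ne_zero (i : ℕ) : f (MvPolynomial.X i) ≠ 0 :=
    (map_ne_zero_iff f f_injective).2 (MvPolynomial.X_ne_zero i)
  have aeval_eq (p : MvPolynomial ℕ ℤ) : MvPolynomial.aeval (f ∘ MvPolynomial.X) p = f p :=
    DFunLike.congr_fun (MvPolynomial.aeval_unique f.toIntAlgHom).symm p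
  apply f_injective
  simpa only [map_add, map_mul, aeval_eq] using aeval_schurSkew1_mul_aeval_schur_eraseRow
    (x := f ∘ MvPolynomial.X) X_ne_zero (f_injective.comp MvPolynomial.X_injective) ht hkn hlam

theorem schurSkew1_mul_schur_eraseRow (n : ℕ) (ht : t ≤ k)
    (hlam : IsPartitionSeq (k + 1) fun j ↦ lam j - 1) :
    schurSkew1 (k + 1) lam 1 n * schur k (eraseRow t lam) 1 n =
      schurSkew1 k (eraseRow t lam) 1 n * schur (k + 1) lam 1 n +
        schur (k + 1) (fun j ↦ lam j - 1) 1 n * schur k (fun j ↦ eraseRow t lam j + 1) 1 n := by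
  have stable := congrArg (truncateVars n) (schurSkew1_mul_schur_eraseRow_of_lt
    (n := max n (k + 2)) ht (by omega) hlam)
  simpa only [map_add, map_mul, truncateVars_schur (le_max_left n (k + 2)) n.succ_pos,
    truncateVars_schurSkew1 (le_max_left n (k + 2)) n.succ_pos] using stable

end Identity

theorem stmt_15_general (k t n : ℕ) (ht : t ≤ k) (lam : ℕ → ℤ)
    (hdec : ∀ i < k, lam (i + 1) ≤ lam i) (hpos : ∀ i ≤ k, 1 ≤ lam i) :
    schurSkew1 (k + 1) lam 1 n *
        schur k (fun j ↦ if j < t then lam j else lam (j + 1) - 1) 1 n =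
      schurSkew1 k (fun j ↦ if j < t then lam j else lam (j + 1) - 1) 1 n *
          schur (k + 1) lam 1 n +
        schur (k + 1) (fun j ↦ lam j - 1) 1 n *
          schur k (fun j ↦ if j < t then lam j + 1 else lam (j + 1)) 1 n := by
  have rho_partition : IsPartitionSeq (k + 1) fun j ↦ lam j - 1 :=
    ⟨fun i hi ↦ sub_le_sub_right (hdec i (by omega)) 1,
      fun i hi ↦ sub_nonneg.2 (hpos i (by omega))⟩
  have nu_eq : (fun j ↦ if j < t then lam j + 1 else lam (j + 1)) =
      fun j ↦ eraseRow t lam j + 1 := by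
    funext j
    grind [eraseRow]
  rw [nu_eq]
  exact schurSkew1_mul_schur_eraseRow n ht rho_partition

/-- for a partition `λ = (λ_1 ≥ … ≥ λ_k ≥ 1)`, `0 ≤ t ≤ k-1` and `n ≥ k`,
with `μ = (λ_1,…,λ_t,λ_{t+2}-1,…,λ_k-1)`, `ν = (λ_1+1,…,λ_t+1,λ_{t+2},…,λ_k)` and
`ρ = (λ_1-1,…,λ_k-1)`:
`s^{[n]}_{λ/1} · s^{[n]}_μ = s^{[n]}_{μ/1} · s^{[n]}_λ + s^{[n]}_ρ · s^{[n]}_ν`. -/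
theorem stmt_15 (k t n : ℕ) (hk : 1 ≤ k) (ht : t ≤ k - 1) (hn : k ≤ n) (lam : ℕ → ℤ)
    (hdec : ∀ i, i + 1 < k → lam (i + 1) ≤ lam i) (hpos : ∀ i, i < k → 1 ≤ lam i) :
    schurSkew1 k lam 1 n *
        schur (k - 1) (fun j => if j < t then lam j else lam (j + 1) - 1) 1 n =
      schurSkew1 (k - 1) (fun j => if j < t then lam j else lam (j + 1) - 1) 1 n *
          schur k lam 1 n +
        schur k (fun j => lam j - 1) 1 n *
          schur (k - 1) (fun j => if j < t then lam j + 1 else lam (j + 1)) 1 n := by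
  obtain ⟨k, rfl⟩ := Nat.exists_eq_add_of_le' hk
  exact stmt_15_general k t n ht lam (fun i hi ↦ hdec i (by omega)) fun i hi ↦ hpos i (by omega)
end

section
/- Let c, r ≥ 1, 0 ≤ t ≤ r−1, and n ≥ 1. Then the polynomial s^{[n]}_{(c^{r−1}, c−1)} · s^{[n]}_{(c^t, (c−1)^{r−t−1})} − s^{[n]}_{(c−1)^r} · s^{[n]}_{((c+1)^t, c^{r−t−1})} in x_1,…,x_n is Schur positive. -/
/-- A polynomial in `x_1,…,x_n` is Schur positive if it is a finite sum `Σ_α c_α s^{[n]}_α`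
over partitions `α` with coefficients `c_α ∈ ℕ` (encoded by a list of shapes, allowing
repetition). -/
def SchurPositive (n : ℕ) (f : MvPolynomial ℕ ℤ) : Prop :=
  ∃ L : List (ℕ × (ℕ → ℤ)),
    (∀ p ∈ L, IsPartitionSeq p.1 p.2) ∧
    f = (L.map fun p => schur p.1 p.2 1 n).sum

/-!
Read a tableau column by column, from right to left. For neighbouring variables `x_p, x_q`, the
generating function of the tableaux to whose right a column `C` can be attached is symmetric in
`x_p, x_q` unless `p ∈ C` and `q ∉ C`. Hence, when `a_β s_λ` is expanded by antisymmetrizing the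
monomials `x^β x^T`, every column that destroys the strict decrease of the exponent vector
contributes zero, and only alternants with strictly decreasing exponents survive, with nonnegative
coefficients. For `β = ρ` a single alternant survives and we get the bialternant formula
`a_ρ s_λ = a_{λ + ρ}`; for `β = λ + ρ` we get that products of Schur polynomials are Schur positive.

In `N ≥ r` variables, the three-term Plücker relation for the alternants gives
* `s_{(c^{r-1}, c-1)} s_{(c^t, (c-1)^{r-t-1})} - s_{(c^t, (c-1)^{r-t})} s_{(c^{r-1})} =
  s_{(c^r)} s_{(c^t, (c-1)^{r-t-2}, c-2)}`,
* `s_{(c^t, (c-1)^{r-t})} s_{(c^{r-1})} - s_{((c-1)^r)} s_{((c+1)^t, c^{r-t-1})} =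
  s_{(c^r)} s_{(c^{t-1}, (c-1)^{r-t})}`,
the left-hand sides being zero in the degenerate cases. Their sum is Schur positive, and setting
`x_i = 0` for `i > n` carries this over to `n` variables.
-/

namespace SchurPolynomial

open MvPolynomial Finset

section Columns

variable {n : ℕ} {p q : Fin n} {C D : Finset (Fin n)}

/-- The number of entries of the column `C` that are smaller than `v`. -/
def countLT (C : Finset (Fin n)) (v : ℕ) : ℕ := #{i ∈ C | i.val < v}

/-- The column with entry set `C` may stand to the left of the one with entry set `D` in a
semistandard tableau. In terms of counts this says both that `C` is at least as tall as `D` and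
that the entries weakly increase along each row. -/
def ColumnLE (C D : Finset (Fin n)) : Prop := ∀ v, countLT D v ≤ countLT C v

/-- The column obtained from `C` by exchanging the roles of the entries `p` and `q`. -/
def swapColumn (p q : Fin n) (C : Finset (Fin n)) : Finset (Fin n) :=
  C.map (Equiv.swap p q).toEmbedding

theorem countLT_succ (C : Finset (Fin n)) (p : Fin n) :
    countLT C (p + 1) = countLT C p + if p ∈ C then 1 else 0 := by
  have h_ite : (if p ∈ C then 1 else 0) = ∑ i ∈ C, if i = p then 1 else 0 := by simp
  rw [h_ite, countLT, countLT, card_filter, card_filter, ← sum_add_distrib]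
  refine sum_congr rfl fun i _ => ?_
  simp only [Fin.ext_iff]
  split_ifs <;> omega

theorem mem_swapColumn {i : Fin n} : i ∈ swapColumn p q C ↔ Equiv.swap p q i ∈ C := by
  rw [swapColumn, mem_map_equiv, Equiv.symm_swap]

theorem left_mem_swapColumn : p ∈ swapColumn p q C ↔ q ∈ C := by
  rw [mem_swapColumn, Equiv.swap_apply_left]

theorem right_mem_swapColumn : q ∈ swapColumn p q C ↔ p ∈ C := by
  rw [mem_swapColumn, Equiv.swap_apply_right]

theorem swapColumn_swapColumn (p q : Fin n) (C : Finset (Fin n)) :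
    swapColumn p q (swapColumn p q C) = C := by
  ext i
  simp [mem_swapColumn]

theorem card_swapColumn (p q : Fin n) (C : Finset (Fin n)) : #(swapColumn p q C) = #C :=
  card_map _

theorem swapColumn_eq_self (h : p ∈ C ↔ q ∈ C) : swapColumn p q C = C := by
  ext i
  rw [mem_swapColumn, Equiv.swap_apply_def]
  split_ifs with hp hq
  · rw [hp, h]
  · rw [hq, h]
  · rfl

theorem val_add_one_of_covBy (hpq : p ⋖ q) : (p : ℕ) + 1 = q :=
  Nat.covBy_iff_add_one_eq.1 (Fin.covBy_iff.1 hpq)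

theorem countLT_swapColumn (hpq : p ⋖ q) (C : Finset (Fin n)) {v : ℕ} (hv : v ≠ q) :
    countLT (swapColumn p q C) v = countLT C v := by
  have hpq := val_add_one_of_covBy hpq
  rw [countLT, swapColumn, filter_map, card_map, countLT]
  congr 1
  refine filter_congr fun i _ => ?_
  simp only [Function.comp_apply, Equiv.coe_toEmbedding, Equiv.swap_apply_def]
  split_ifs with hp hq
  · rw [hp]; omega
  · rw [hq]; omega
  · rfl

theorem countLT_right_of_covBy (hpq : p ⋖ q) (C : Finset (Fin n)) :
    countLT C q = countLT C p + if p ∈ C then 1 else 0 := by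
  rw [← val_add_one_of_covBy hpq, countLT_succ]

theorem ColumnLE.swapColumn_left (hpq : p ⋖ q) (hC : p ∈ C → q ∈ C) (h : ColumnLE D C) :
    ColumnLE (swapColumn p q D) C := by
  intro v
  rcases eq_or_ne v q with rfl | hv
  · have hpq' := val_add_one_of_covBy hpq
    have h_p := h p
    have h_q := h (q + 1)
    have hD_p := countLT_swapColumn hpq D (v := p) (by omega)
    have hD_q := countLT_swapColumn hpq D (v := q + 1) (by omega)
    have hC_q := countLT_succ C q
    have hD_q' := countLT_succ (swapColumn p q D) q
    rw [countLT_right_of_covBy hpq] at hC_q hD_q' ⊢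
    rw [countLT_right_of_covBy hpq (swapColumn p q D)]
    split_ifs at * <;> first | omega | tauto
  · rw [countLT_swapColumn hpq D hv]
    exact h v

theorem ColumnLE.swapColumn_right (hpq : p ⋖ q) (hq : q ∉ C) (h : ColumnLE D C) :
    ColumnLE D (swapColumn p q C) := by
  intro v
  rcases eq_or_ne v q with rfl | hv
  · have hpq' := val_add_one_of_covBy hpq
    have h_p := h p
    have hp : p ∉ swapColumn p q C := by rwa [left_mem_swapColumn]
    rw [countLT_right_of_covBy hpq, countLT_right_of_covBy hpq, if_neg hp,
      countLT_swapColumn hpq C (by omega)]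
    omega
  · rw [countLT_swapColumn hpq C hv]
    exact h v

theorem mem_of_columnLE_swapColumn (hpq : p ⋖ q) (hp : p ∈ C) (hq : q ∉ C)
    (h : ColumnLE D (swapColumn p q C)) (hD : ¬ColumnLE D C) : p ∉ D ∧ q ∈ D := by
  have hpq' := val_add_one_of_covBy hpq
  have h_of_ne {v : ℕ} (hv : v ≠ q) : countLT C v ≤ countLT D v :=
    countLT_swapColumn hpq C hv ▸ h v
  have h_lt : countLT D q < countLT C q := by
    by_contra! h_le
    exact hD fun v => (eq_or_ne v q).elim (fun hv => hv ▸ h_le) h_of_ne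
  have h_p := h_of_ne (v := p) (by omega)
  have h_q := h_of_ne (v := q + 1) (by omega)
  have hC_q := countLT_succ C q
  have hD_q := countLT_succ D q
  rw [countLT_right_of_covBy hpq, countLT_right_of_covBy hpq C] at h_lt
  rw [countLT_right_of_covBy hpq] at hC_q hD_q
  simp only [hp, hq, if_true, if_false] at *
  split_ifs at * <;> first | omega | tauto

end Columns

section ColumnSums

variable (R : Type*) [CommRing R] {n : ℕ} {p q : Fin n} {C : Finset (Fin n)}

/-- The product of the variables indexed by the entries of the column `C`. -/
noncomputable def columnMonomial (C : Finset (Fin n)) : MvPolynomial (Fin n) R := ∏ i ∈ C, X i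

open Classical in
/-- The generating function of the semistandard tableaux with `m` columns of heights
`h 0, …, h (m - 1)` to whose right the column `C` can be attached; the recursion removes the
rightmost column. For `C = ∅` the last condition is void. -/
noncomputable def columnSum (h : ℕ → ℕ) : ℕ → Finset (Fin n) → MvPolynomial (Fin n) R
  | 0, _ => 1
  | m + 1, C => ∑ D with #D = h m ∧ ColumnLE D C, columnMonomial R D * columnSum h m D

/-- The subalgebra of polynomials that do not change when the variables `p` and `q` are
exchanged. -/
noncomputable def swapInvariants (p q : Fin n) : Subalgebra R (MvPolynomial (Fin n) R) :=
  AlgHom.equalizer (rename (Equiv.swap p q)) (AlgHom.id R _)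

variable {R}

theorem mem_swapInvariants {f : MvPolynomial (Fin n) R} :
    f ∈ swapInvariants R p q ↔ rename (Equiv.swap p q) f = f :=
  Iff.rfl

theorem rename_swap_columnMonomial (p q : Fin n) (C : Finset (Fin n)) :
    rename (Equiv.swap p q) (columnMonomial R C) = columnMonomial R (swapColumn p q C) := by
  simp [columnMonomial, swapColumn]

theorem columnMonomial_mem_swapInvariants (h : p ∈ C ↔ q ∈ C) :
    columnMonomial R C ∈ swapInvariants R p q := by
  rw [mem_swapInvariants, rename_swap_columnMonomial, swapColumn_eq_self h]

theorem X_add_X_mem_swapInvariants (p q : Fin n) :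
    (X p + X q : MvPolynomial (Fin n) R) ∈ swapInvariants R p q := by
  simp [mem_swapInvariants, add_comm]

theorem X_mul_columnMonomial {i : Fin n} (hi : i ∉ C) :
    X i * columnMonomial R C = columnMonomial R (insert i C) :=
  (prod_insert hi).symm

theorem swapColumn_eq_insert_erase (hp : p ∈ C) (hq : q ∉ C) :
    swapColumn p q C = insert q (C.erase p) := by
  ext i
  rw [mem_swapColumn, Equiv.swap_apply_def, mem_insert, mem_erase]
  split_ifs <;> grind

section InductionStep

variable {h : ℕ → ℕ} {m : ℕ}

theorem X_mul_columnSum_succ_add_mem_swapInvariants (hpq : p ⋖ q)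
    (inv : ∀ C : Finset (Fin n), (p ∈ C → q ∈ C) → columnSum R h m C ∈ swapInvariants R p q)
    (inv_succ : ∀ C : Finset (Fin n), (p ∈ C → q ∈ C) →
      columnSum R h (m + 1) C ∈ swapInvariants R p q)
    (hp : p ∈ C) (hq : q ∉ C) :
    X p * columnSum R h (m + 1) C + X q * columnSum R h (m + 1) (swapColumn p q C) ∈
      swapInvariants R p q := by
  classical
  have split : columnSum R h (m + 1) (swapColumn p q C) = columnSum R h (m + 1) C +
      ∑ D with (#D = h m ∧ ColumnLE D (swapColumn p q C)) ∧ ¬ColumnLE D C,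
        columnMonomial R D * columnSum R h m D := by
    rw [columnSum, columnSum, ← sum_filter_add_sum_filter_not _ (ColumnLE · C), filter_filter,
      filter_filter]
    congr 2
    refine filter_congr fun D _ => ?_
    exact ⟨fun hD => ⟨hD.1.1, hD.2⟩, fun hD => ⟨⟨hD.1, hD.2.swapColumn_right hpq hq⟩, hD.2⟩⟩
  have collect : X p * columnSum R h (m + 1) C + X q * columnSum R h (m + 1) (swapColumn p q C) =
      (X p + X q) * columnSum R h (m + 1) (swapColumn p q C) -
        ∑ D with (#D = h m ∧ ColumnLE D (swapColumn p q C)) ∧ ¬ColumnLE D C,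
          X p * columnMonomial R D * columnSum R h m D := by
    simp only [mul_assoc, ← mul_sum]
    rw [split]
    ring
  rw [collect]
  refine sub_mem (mul_mem (X_add_X_mem_swapInvariants p q) (inv_succ _ ?_))
    (sum_mem fun D hD => ?_)
  · simp [left_mem_swapColumn, hq]
  · simp only [mem_filter, mem_univ, true_and] at hD
    obtain ⟨hpD, hqD⟩ := mem_of_columnLE_swapColumn hpq hp hq hD.1.2 hD.2
    rw [X_mul_columnMonomial hpD]
    exact mul_mem (columnMonomial_mem_swapInvariants (by simp [hqD])) (inv D (absurd · hpD))

theorem columnMonomial_mul_columnSum_add_mem_swapInvariants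
    (inv_pair : ∀ C : Finset (Fin n), p ∈ C → q ∉ C →
      X p * columnSum R h m C + X q * columnSum R h m (swapColumn p q C) ∈ swapInvariants R p q)
    (hp : p ∈ C) (hq : q ∉ C) :
    columnMonomial R C * columnSum R h m C +
      columnMonomial R (swapColumn p q C) * columnSum R h m (swapColumn p q C) ∈
        swapInvariants R p q := by
  have factor_left : columnMonomial R C = X p * columnMonomial R (C.erase p) := by
    rw [X_mul_columnMonomial (notMem_erase p C), insert_erase hp]
  have factor_right :
      columnMonomial R (swapColumn p q C) = X q * columnMonomial R (C.erase p) := by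
    rw [swapColumn_eq_insert_erase hp hq, X_mul_columnMonomial fun hq' => hq (mem_of_mem_erase hq')]
  rw [factor_left, factor_right]
  convert mul_mem (columnMonomial_mem_swapInvariants (R := R) (C := C.erase p) (by simp [hq]))
    (inv_pair C hp hq) using 1
  ring

theorem columnSum_succ_mem_swapInvariants (hpq : p ⋖ q)
    (inv : ∀ C : Finset (Fin n), (p ∈ C → q ∈ C) → columnSum R h m C ∈ swapInvariants R p q)
    (inv_pair : ∀ C : Finset (Fin n), p ∈ C → q ∉ C →
      X p * columnSum R h m C + X q * columnSum R h m (swapColumn p q C) ∈ swapInvariants R p q)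
    (hC : p ∈ C → q ∈ C) : columnSum R h (m + 1) C ∈ swapInvariants R p q := by
  have single {D : Finset (Fin n)} (hD : p ∈ D ↔ q ∈ D) :
      columnMonomial R D * columnSum R h m D ∈ swapInvariants R p q :=
    mul_mem (columnMonomial_mem_swapInvariants hD) (inv D hD.1)
  have pair {D : Finset (Fin n)} (hD : ¬(p ∈ D ↔ q ∈ D)) :
      columnMonomial R D * columnSum R h m D +
        columnMonomial R (swapColumn p q D) * columnSum R h m (swapColumn p q D) ∈
          swapInvariants R p q := by
    by_cases hp : p ∈ D
    · exact columnMonomial_mul_columnSum_add_mem_swapInvariants inv_pair hp (by tauto)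
    · have := columnMonomial_mul_columnSum_add_mem_swapInvariants inv_pair
        (left_mem_swapColumn.2 (by tauto : q ∈ D)) (mt right_mem_swapColumn.1 hp)
      rwa [swapColumn_swapColumn, add_comm] at this
  -- Swapping pairs up the columns `D` that contain exactly one of `p` and `q`.
  rw [mem_swapInvariants, columnSum, map_sum, ← sub_eq_zero, ← sum_sub_distrib]
  refine sum_involution (fun D _ => swapColumn p q D) (fun D _ => ?_) (fun D _ hD h_eq => hD ?_)
    (fun D hD => ?_) (fun D _ => swapColumn_swapColumn p q D)
  · by_cases hD : p ∈ D ↔ q ∈ D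
    · rw [swapColumn_eq_self hD, mem_swapInvariants.1 (single hD), sub_self, add_zero]
    · rw [sub_add_sub_comm, ← map_add, mem_swapInvariants.1 (pair hD), sub_self]
  · have hD : p ∈ D ↔ q ∈ D := (iff_of_eq (congrArg (p ∈ ·) h_eq)).symm.trans left_mem_swapColumn
    rw [mem_swapInvariants.1 (single hD), sub_self]
  · simp only [mem_filter, mem_univ, true_and] at hD ⊢
    exact ⟨(card_swapColumn p q D).trans hD.1, hD.2.swapColumn_left hpq hC⟩

end InductionStep

theorem columnSum_mem_swapInvariants (hpq : p ⋖ q) (h : ℕ → ℕ) (m : ℕ) (hC : p ∈ C → q ∈ C) :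
    columnSum R h m C ∈ swapInvariants R p q := by
  suffices H : (∀ C : Finset (Fin n), (p ∈ C → q ∈ C) →
        columnSum R h m C ∈ swapInvariants R p q) ∧
      ∀ C : Finset (Fin n), p ∈ C → q ∉ C →
        X p * columnSum R h m C + X q * columnSum R h m (swapColumn p q C) ∈ swapInvariants R p q
    from H.1 C hC
  induction m with
  | zero =>
    exact ⟨fun C _ => one_mem _, fun C _ _ => by
      simpa only [columnSum, mul_one] using X_add_X_mem_swapInvariants p q⟩
  | succ m ih =>
    have inv_succ : ∀ C : Finset (Fin n), (p ∈ C → q ∈ C) →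
        columnSum R h (m + 1) C ∈ swapInvariants R p q :=
      fun C => columnSum_succ_mem_swapInvariants hpq ih.1 ih.2
    exact ⟨inv_succ, fun C => X_mul_columnSum_succ_add_mem_swapInvariants hpq ih.1 inv_succ⟩

theorem columnSum_empty_isSymmetric (h : ℕ → ℕ) (m : ℕ) :
    (columnSum R h m (∅ : Finset (Fin n))).IsSymmetric := by
  intro w
  cases n with
  | zero => rw [Subsingleton.elim w 1, Equiv.Perm.coe_one, rename_id_apply]
  | succ n =>
    have hw : w ∈ Submonoid.closure (Set.range fun i : Fin n => Equiv.swap i.castSucc i.succ) := by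
      rw [Equiv.Perm.mclosure_swap_castSucc_succ]
      exact Submonoid.mem_top w
    induction hw using Submonoid.closure_induction with
    | mem _ hx =>
      obtain ⟨i, rfl⟩ := hx
      exact columnSum_mem_swapInvariants (Fin.covBy_iff.2 <| by simp) h m (by simp)
    | one => rw [Equiv.Perm.coe_one, rename_id_apply]
    | mul x y _ _ hx hy => rw [Equiv.Perm.coe_mul, ← rename_rename, hy, hx]

end ColumnSums

section Alternants

variable {A B : Type*} [CommRing A] [CommRing B] {n : ℕ}

/-- The alternant `a_β = det (x_j ^ β_i)`. -/
noncomputable def alternant (x : Fin n → A) (β : Fin n → ℕ) : A :=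
  Matrix.det (Matrix.of fun i j => x j ^ β i)

/-- The exponent vector of the Vandermonde determinant, `(n - 1, …, 1, 0)`. -/
def staircase (n : ℕ) : Fin n → ℕ := fun i => n - 1 - i

/-- The sums of alternants with strictly decreasing exponents. -/
noncomputable def alternantCone (x : Fin n → A) : AddSubmonoid A :=
  AddSubmonoid.closure (alternant x '' {β | StrictAnti β})

theorem map_alternant (φ : A →+* B) (x : Fin n → A) (β : Fin n → ℕ) :
    φ (alternant x β) = alternant (φ ∘ x) β := by
  rw [alternant, RingHom.map_det, alternant]
  congr 1
  ext i j
  simp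

theorem map_mem_alternantCone (φ : A →+* B) {x : Fin n → A} {f : A} (hf : f ∈ alternantCone x) :
    φ f ∈ alternantCone (φ ∘ x) := by
  refine AddSubmonoid.closure_le (S := (alternantCone (φ ∘ x)).comap φ.toAddMonoidHom).2 ?_ hf
  rintro _ ⟨β, hβ, rfl⟩
  exact AddSubmonoid.subset_closure ⟨β, hβ, (map_alternant φ x β).symm⟩

theorem strictAnti_staircase (n : ℕ) : StrictAnti (staircase n) := by
  intro p q hpq
  simp only [staircase]
  omega

theorem antitone_add_val_of_strictAnti {β : Fin n → ℕ} (hβ : StrictAnti β) :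
    Antitone fun i => β i + i := by
  refine (antitone_iff_forall_covBy _).2 fun p q hpq => ?_
  have := hβ hpq.lt
  have := val_add_one_of_covBy hpq
  lia

theorem alternant_staircase_ne_zero [IsDomain A] {x : Fin n → A} (hx : Function.Injective x) :
    alternant x (staircase n) ≠ 0 := by
  have h_vandermonde : (Matrix.vandermonde x).transpose =
      (Matrix.of fun i j : Fin n => x j ^ staircase n i).submatrix Fin.revPerm id := by
    ext i j
    simp only [Matrix.transpose_apply, Matrix.vandermonde_apply, Matrix.submatrix_apply,
      Matrix.of_apply, staircase, Fin.revPerm_apply, Fin.val_rev, id]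
    congr 1
    omega
  intro h_zero
  refine Matrix.det_vandermonde_ne_zero_iff.2 hx ?_
  rw [← Matrix.det_transpose, h_vandermonde, Matrix.det_permute, ← alternant, h_zero, mul_zero]

end Alternants

section Alternation

variable {R : Type*} [CommRing R] {n : ℕ} {p q : Fin n} {C : Finset (Fin n)} {β : Fin n → ℕ}

/-- Antisymmetrization of a polynomial over all permutations of the variables. -/
noncomputable def alternation : MvPolynomial (Fin n) R →ₗ[R] MvPolynomial (Fin n) R :=
  ∑ w : Equiv.Perm (Fin n), (Equiv.Perm.sign w : ℤ) • (rename w).toLinearMap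

theorem alternation_apply (f : MvPolynomial (Fin n) R) :
    alternation f = ∑ w : Equiv.Perm (Fin n), (Equiv.Perm.sign w : ℤ) • rename w f := by
  simp [alternation]

theorem alternation_mul_of_isSymmetric (f : MvPolynomial (Fin n) R) {g : MvPolynomial (Fin n) R}
    (hg : g.IsSymmetric) : alternation (f * g) = alternation f * g := by
  simp only [alternation_apply, sum_mul, map_mul, hg _, smul_mul_assoc]

theorem alternation_eq_zero_of_mem_swapInvariants (hpq : p ≠ q) {f : MvPolynomial (Fin n) R}
    (hf : f ∈ swapInvariants R p q) : alternation f = 0 := by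
  rw [alternation_apply]
  refine sum_involution (fun w _ => w * Equiv.swap p q) (fun w _ => ?_) (fun w _ _ h_eq => ?_)
    (fun w _ => mem_univ _) (fun w _ => by simp [mul_assoc])
  · rw [Equiv.Perm.coe_mul, ← rename_rename, mem_swapInvariants.1 hf, Equiv.Perm.sign_mul,
      Equiv.Perm.sign_swap hpq]
    simp
  · exact hpq (Equiv.swap_eq_one_iff.1 (mul_eq_left.1 h_eq))

theorem alternation_prod_X_pow (β : Fin n → ℕ) :
    alternation (∏ i, X i ^ β i : MvPolynomial (Fin n) R) = alternant X β := by
  rw [alternation_apply, alternant, ← Matrix.det_transpose, Matrix.det_apply]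
  refine sum_congr rfl fun w _ => ?_
  simp [map_prod, Units.smul_def]

theorem prod_X_pow_mem_swapInvariants (h : β p = β q) :
    (∏ i, X i ^ β i : MvPolynomial (Fin n) R) ∈ swapInvariants R p q := by
  rw [mem_swapInvariants, map_prod]
  refine Fintype.prod_equiv (Equiv.swap p q) _ _ fun i => ?_
  rw [map_pow, rename_X, Equiv.swap_apply_def]
  split_ifs with hp hq
  · rw [hp, h]
  · rw [hq, h]
  · rfl

/-- The exponent vector `β` with the indicator vector of the column `C` added. -/
def addColumn (β : Fin n → ℕ) (C : Finset (Fin n)) : Fin n → ℕ :=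
  fun i => β i + if i ∈ C then 1 else 0

theorem prod_X_pow_mul_columnMonomial (β : Fin n → ℕ) (C : Finset (Fin n)) :
    (∏ i, X i ^ β i) * columnMonomial R C = ∏ i, X i ^ addColumn β C i := by
  simp only [columnMonomial, addColumn, pow_add, prod_mul_distrib, pow_ite, pow_one, pow_zero,
    prod_ite_mem, univ_inter]

theorem exists_covBy_addColumn_eq (hβ : StrictAnti β) (hC : ¬StrictAnti (addColumn β C)) :
    ∃ p q, p ⋖ q ∧ p ∉ C ∧ addColumn β C p = addColumn β C q := by
  rw [strictAnti_iff_forall_covBy] at hC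
  push Not at hC
  obtain ⟨p, q, hpq, h_le⟩ := hC
  have h_lt := hβ hpq.lt
  simp only [addColumn] at h_le ⊢
  refine ⟨p, q, hpq, fun hp => ?_, ?_⟩
  · rw [if_pos hp] at h_le
    split_ifs at h_le <;> omega
  · split_ifs at h_le ⊢ <;> omega

theorem alternation_mul_columnSum_eq_zero (h : ℕ → ℕ) (m : ℕ) (hβ : StrictAnti β)
    (hC : ¬StrictAnti (addColumn β C)) :
    alternation ((∏ i, X i ^ addColumn β C i) * columnSum R h m C) = 0 := by
  obtain ⟨p, q, hpq, hp, h_eq⟩ := exists_covBy_addColumn_eq hβ hC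
  exact alternation_eq_zero_of_mem_swapInvariants hpq.lt.ne
    (mul_mem (prod_X_pow_mem_swapInvariants h_eq)
      (columnSum_mem_swapInvariants hpq h m (absurd · hp)))

open Classical in
theorem alternation_mul_columnSum_succ (h : ℕ → ℕ) (m : ℕ) (β : Fin n → ℕ) (C : Finset (Fin n)) :
    alternation ((∏ i, X i ^ β i) * columnSum R h (m + 1) C) =
      ∑ D with #D = h m ∧ ColumnLE D C,
        alternation ((∏ i, X i ^ addColumn β D i) * columnSum R h m D) := by
  simp only [columnSum, mul_sum, map_sum, ← mul_assoc, prod_X_pow_mul_columnMonomial]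

theorem alternation_mul_columnSum_mem_alternantCone (h : ℕ → ℕ) (m : ℕ) (hβ : StrictAnti β)
    (C : Finset (Fin n)) :
    alternation ((∏ i, X i ^ β i) * columnSum R h m C) ∈
      alternantCone (X : Fin n → MvPolynomial (Fin n) R) := by
  induction m generalizing β C with
  | zero =>
    rw [columnSum, mul_one, alternation_prod_X_pow]
    exact AddSubmonoid.subset_closure ⟨β, hβ, rfl⟩
  | succ m ih =>
    rw [alternation_mul_columnSum_succ]
    refine sum_mem fun D _ => ?_
    by_cases hD : StrictAnti (addColumn β D)
    · exact ih hD D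
    · rw [alternation_mul_columnSum_eq_zero h m hβ hD]
      exact zero_mem _

theorem alternant_mul_columnSum (h : ℕ → ℕ) (m : ℕ) (β : Fin n → ℕ) :
    alternant X β * columnSum R h m ∅ = alternation ((∏ i, X i ^ β i) * columnSum R h m ∅) := by
  rw [alternation_mul_of_isSymmetric _ (columnSum_empty_isSymmetric h m), alternation_prod_X_pow]

end Alternation

section Bialternant

variable {R : Type*} [CommRing R] {n k : ℕ} {C : Finset (Fin n)} {β : Fin n → ℕ}

/-- The column with entries `0, 1, …, k - 1`. -/
def initialColumn (n k : ℕ) : Finset (Fin n) := {i | i.val < k}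

theorem mem_initialColumn {i : Fin n} : i ∈ initialColumn n k ↔ i.val < k := by
  simp [initialColumn]

theorem card_initialColumn (hk : k ≤ n) : #(initialColumn n k) = k := by
  rw [initialColumn, Fin.card_filter_val_lt, min_eq_right hk]

theorem eq_initialColumn_of_isLowerSet (hC : IsLowerSet (C : Set (Fin n))) :
    C = initialColumn n #C := by
  refine eq_of_subset_of_card_le (fun q hq => ?_) ?_
  · have h_sub : initialColumn n (q + 1) ⊆ C := fun p hp =>
      hC (Fin.le_def.2 (Nat.lt_succ_iff.1 (mem_initialColumn.1 hp))) hq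
    have h_card := card_le_card h_sub
    rw [card_initialColumn (by omega)] at h_card
    exact mem_initialColumn.2 h_card
  · rw [card_initialColumn (card_finset_fin_le C)]

theorem columnLE_initialColumn_iff :
    ColumnLE C (initialColumn n k) ↔ initialColumn n k ⊆ C := by
  refine ⟨fun h => ?_, fun h v => card_le_card (filter_subset_filter _ h)⟩
  have h_card := h k
  rw [countLT, filter_true_of_mem fun i hi => mem_initialColumn.1 hi] at h_card
  have h_sub : {i ∈ C | i.val < k} ⊆ initialColumn n k := fun i hi =>
    mem_initialColumn.2 (mem_filter.1 hi).2
  exact eq_of_subset_of_card_le h_sub h_card ▸ filter_subset _ C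

theorem strictAnti_addColumn_initialColumn (hβ : StrictAnti β) (k : ℕ) :
    StrictAnti (addColumn β (initialColumn n k)) := by
  intro p q hpq
  have := hβ hpq
  simp only [addColumn, mem_initialColumn]
  split_ifs <;> omega

theorem eq_initialColumn_of_strictAnti_addColumn (hβ : ∀ i : Fin n, k ≤ i → β i = staircase n i)
    (hk : initialColumn n k ⊆ C) (hC : StrictAnti (addColumn β C)) : C = initialColumn n #C := by
  refine eq_initialColumn_of_isLowerSet fun q p hpq hq => ?_
  by_contra hp
  have hkp : k ≤ p := by
    by_contra! hpk
    exact hp (hk (mem_initialColumn.2 hpk))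
  have h_le := antitone_add_val_of_strictAnti hC hpq
  rw [mem_coe] at hp hq
  simp only [addColumn, if_pos hq, if_neg hp, hβ p hkp, hβ q (hkp.trans hpq), staircase] at h_le
  omega

theorem alternation_mul_columnSum_initialColumn {h : ℕ → ℕ} (h_anti : Antitone h)
    (h_le : ∀ j, h j ≤ n) {m : ℕ} (hβ : StrictAnti β) (hkh : ∀ j < m, k ≤ h j)
    (h_stair : ∀ i : Fin n, k ≤ i → β i = staircase n i) :
    alternation ((∏ i, X i ^ β i) * columnSum R h m (initialColumn n k)) =
      alternant X fun i => β i + #{j ∈ range m | i < h j} := by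
  induction m generalizing β k with
  | zero => simp [columnSum, alternation_prod_X_pow]
  | succ m ih =>
    have hkm : k ≤ h m := hkh m m.lt_succ_self
    rw [alternation_mul_columnSum_succ, sum_eq_single (initialColumn n (h m))]
    · rw [ih (strictAnti_addColumn_initialColumn hβ _) fun j hj => h_anti hj.le]
      · congr 1
        funext i
        rw [addColumn, range_add_one, filter_insert]
        simp only [mem_initialColumn]
        split_ifs
        · rw [card_insert_of_notMem (by simp)]
          ring
        · ring
      · intro i hi
        rw [addColumn, if_neg (mt mem_initialColumn.1 hi.not_gt), add_zero,
          h_stair i (hkm.trans hi)]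
    · simp only [mem_filter, mem_univ, true_and, columnLE_initialColumn_iff]
      intro D hD h_ne
      refine alternation_mul_columnSum_eq_zero h m hβ fun hs => h_ne ?_
      rw [← hD.1, ← eq_initialColumn_of_strictAnti_addColumn h_stair hD.2 hs]
    · simp only [mem_filter, mem_univ, true_and, columnLE_initialColumn_iff]
      intro h_not
      exact (h_not ⟨card_initialColumn (h_le m), fun i hi => mem_initialColumn.2
        ((mem_initialColumn.1 hi).trans_le hkm)⟩).elim

theorem alternant_staircase_mul_columnSum {h : ℕ → ℕ} (h_anti : Antitone h) (h_le : ∀ j, h j ≤ n)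
    (m : ℕ) :
    alternant X (staircase n) * columnSum R h m ∅ =
      alternant X fun i => staircase n i + #{j ∈ range m | i < h j} := by
  have h_empty : initialColumn n 0 = ∅ := by simp [initialColumn]
  rw [alternant_mul_columnSum, ← h_empty]
  exact alternation_mul_columnSum_initialColumn h_anti h_le (strictAnti_staircase n)
    (fun _ _ => Nat.zero_le _) fun _ _ => rfl

end Bialternant

section ColumnEntries

variable {n h i : ℕ} {C D : Finset (Fin n)} {e : ℕ → ℕ}

/-- The `i`-th smallest element of the column `C`, counted from `i = 0` and increased by `1` so
that it is a tableau entry in `{1, …, n}`; it is `0` below the bottom of the column. -/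
def columnEntry (C : Finset (Fin n)) (i : ℕ) : ℕ :=
  if hi : i < #C then C.orderEmbOfFin rfl ⟨i, hi⟩ + 1 else 0

theorem columnEntry_of_lt (hi : i < #C) : columnEntry C i = C.orderEmbOfFin rfl ⟨i, hi⟩ + 1 :=
  dif_pos hi

theorem columnEntry_of_ge (hi : #C ≤ i) : columnEntry C i = 0 :=
  dif_neg hi.not_gt

theorem one_le_columnEntry (hi : i < #C) : 1 ≤ columnEntry C i := by
  rw [columnEntry_of_lt hi]
  omega

theorem columnEntry_le (C : Finset (Fin n)) (i : ℕ) : columnEntry C i ≤ n := by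
  rw [columnEntry]
  split_ifs <;> omega

theorem columnEntry_lt_columnEntry {i₁ i₂ : ℕ} (h : i₁ < i₂) (hi₂ : i₂ < #C) :
    columnEntry C i₁ < columnEntry C i₂ := by
  rw [columnEntry_of_lt (h.trans hi₂), columnEntry_of_lt hi₂]
  exact Nat.succ_lt_succ ((C.orderEmbOfFin rfl).strictMono h)

theorem columnEntry_le_iff {v : ℕ} (hi : i < #C) : columnEntry C i ≤ v ↔ i < countLT C v := by
  set below : Finset (Fin #C) := {j | (C.orderEmbOfFin rfl j).val < v} with h_below
  have h_lower : IsLowerSet (below : Set (Fin #C)) := fun j j' hj hv => by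
    simp only [h_below, mem_coe, mem_filter_univ] at hv ⊢
    exact (Fin.le_def.1 ((C.orderEmbOfFin rfl).monotone hj)).trans_lt hv
  have h_card : countLT C v = #below := by
    conv_lhs => rw [countLT, ← map_orderEmbOfFin_univ C rfl, filter_map, card_map]
    rfl
  calc columnEntry C i ≤ v ↔ ⟨i, hi⟩ ∈ below := by
        simp [columnEntry_of_lt hi, h_below]
    _ ↔ i < countLT C v := by
        rw [h_card, eq_initialColumn_of_isLowerSet h_lower, mem_initialColumn,
          ← eq_initialColumn_of_isLowerSet h_lower]

theorem countLT_le_card (C : Finset (Fin n)) (v : ℕ) : countLT C v ≤ #C := card_filter_le _ _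

theorem countLT_self (C : Finset (Fin n)) : countLT C n = #C := by
  simp [countLT]

theorem columnLE_iff_columnEntry_le :
    ColumnLE C D ↔ #D ≤ #C ∧ ∀ i < #D, columnEntry C i ≤ columnEntry D i := by
  constructor
  · intro h
    have h_card : #D ≤ #C := by simpa only [countLT_self] using h n
    refine ⟨h_card, fun i hi => ?_⟩
    rw [columnEntry_le_iff (hi.trans_le h_card)]
    exact ((columnEntry_le_iff hi).1 le_rfl).trans_le (h _)
  · rintro ⟨h_card, h_entry⟩ v
    by_contra! h_lt
    have hi : countLT C v < #D := h_lt.trans_le (countLT_le_card D v)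
    have h_le := (h_entry _ hi).trans ((columnEntry_le_iff hi).2 h_lt)
    exact lt_irrefl _ ((columnEntry_le_iff (hi.trans_le h_card)).1 h_le)

theorem mem_iff_exists_columnEntry_eq {v : Fin n} :
    v ∈ C ↔ ∃ i < #C, columnEntry C i = v + 1 := by
  constructor
  · intro hv
    rw [← mem_coe, ← range_orderEmbOfFin C rfl] at hv
    obtain ⟨i, rfl⟩ := hv
    exact ⟨i, i.2, columnEntry_of_lt i.2⟩
  · rintro ⟨i, hi, h_eq⟩
    rw [columnEntry_of_lt hi, Nat.add_right_cancel_iff, ← Fin.ext_iff] at h_eq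
    exact h_eq ▸ orderEmbOfFin_mem C rfl _

theorem rename_columnMonomial {R : Type*} [CommRing R] (C : Finset (Fin n)) :
    rename (fun i : Fin n => i.val + 1) (columnMonomial R C) =
      ∏ i ∈ range #C, X (columnEntry C i) := by
  rw [columnMonomial, ← Fin.prod_univ_eq_prod_range (fun i => X (columnEntry C i)), map_prod]
  conv_lhs => rw [← map_orderEmbOfFin_univ C rfl, prod_map]
  simp [columnEntry_of_lt]

/-- The column whose entries, in the range `{1, …, n}` of tableau entries, are
`e 0, …, e (h - 1)`. -/
def columnOfEntries (n h : ℕ) (e : ℕ → ℕ) : Finset (Fin n) := {v | ∃ i < h, e i = v + 1}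

theorem card_columnOfEntries (h_mono : ∀ i₁ i₂, i₁ < i₂ → i₂ < h → e i₁ < e i₂)
    (h_range : ∀ i < h, 1 ≤ e i ∧ e i ≤ n) :
    #(columnOfEntries n h e) = h := by
  have h_image : (range h).image e =
      (columnOfEntries n h e).map (Fin.valEmbedding.trans (addRightEmbedding 1)) := by
    ext v
    simp only [mem_image, mem_range, mem_map, columnOfEntries, mem_filter_univ,
      Function.Embedding.trans_apply, Fin.valEmbedding_apply, addRightEmbedding_apply]
    constructor
    · rintro ⟨i, hi, rfl⟩
      obtain ⟨h_one, h_n⟩ := h_range i hi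
      have h_cancel : e i - 1 + 1 = e i := Nat.sub_add_cancel h_one
      exact ⟨⟨e i - 1, by omega⟩, ⟨i, hi, h_cancel.symm⟩, h_cancel⟩
    · rintro ⟨w, ⟨i, hi, hw⟩, rfl⟩
      exact ⟨i, hi, hw⟩
  have h_inj : Set.InjOn e (range h) := fun i hi j hj h_eq => by
    simp only [coe_range, Set.mem_Iio] at hi hj
    rcases lt_trichotomy i j with h_lt | h_lt | h_lt
    · exact absurd h_eq (h_mono i j h_lt hj).ne
    · exact h_lt
    · exact absurd h_eq.symm (h_mono j i h_lt hi).ne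
  rw [← card_map, ← h_image, card_image_of_injOn h_inj, card_range]

theorem columnEntry_columnOfEntries (h_mono : ∀ i₁ i₂, i₁ < i₂ → i₂ < h → e i₁ < e i₂)
    (h_range : ∀ i < h, 1 ≤ e i ∧ e i ≤ n) (hi : i < h) :
    columnEntry (columnOfEntries n h e) i = e i := by
  have h_card := card_columnOfEntries h_mono h_range
  have h_lt (j : Fin #(columnOfEntries n h e)) : e j - 1 < n := by
    have := h_range j (by omega)
    omega
  have h_mem (j : Fin #(columnOfEntries n h e)) :
      (⟨e j - 1, h_lt j⟩ : Fin n) ∈ columnOfEntries n h e := by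
    have := h_range j (by omega)
    simp only [columnOfEntries, mem_filter_univ]
    exact ⟨j, by omega, by omega⟩
  have h_strictMono : StrictMono fun j : Fin #(columnOfEntries n h e) =>
      (⟨e j - 1, h_lt j⟩ : Fin n) := fun j j' hj => by
    have := h_mono j j' hj (by omega)
    have := h_range j (by omega)
    simp only [Fin.lt_def]
    omega
  rw [columnEntry_of_lt (hi.trans_eq h_card.symm), ← orderEmbOfFin_unique rfl h_mem h_strictMono]
  exact Nat.sub_add_cancel (h_range i hi).1

end ColumnEntries

section ColumnSequences

variable {R : Type*} [CommRing R] {n m : ℕ} {h : ℕ → ℕ} {C D : Finset (Fin n)}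

/-- The columns `F 0, …, F (m - 1)`, of heights `h 0, …, h (m - 1)`, followed by `C` can stand side
by side in a semistandard tableau. -/
structure IsColumnSeq (h : ℕ → ℕ) (C : Finset (Fin n)) (F : Fin m → Finset (Fin n)) : Prop where
  card_eq : ∀ j, #(F j) = h j
  columnLE : ∀ j j', j < j' → ColumnLE (F j) (F j')
  columnLE_right : ∀ j, ColumnLE (F j) C

theorem isColumnSeq_iff {F : Fin m → Finset (Fin n)} :
    IsColumnSeq h C F ↔ (∀ j, #(F j) = h j) ∧ (∀ j j', j < j' → ColumnLE (F j) (F j')) ∧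
      ∀ j, ColumnLE (F j) C :=
  ⟨fun ⟨h_card, h_le, h_C⟩ => ⟨h_card, h_le, h_C⟩, fun ⟨h_card, h_le, h_C⟩ => ⟨h_card, h_le, h_C⟩⟩

theorem isColumnSeq_snoc {F : Fin m → Finset (Fin n)} :
    IsColumnSeq h C (Fin.snoc (α := fun _ => Finset (Fin n)) F D) ↔
      (#D = h m ∧ ColumnLE D C) ∧ IsColumnSeq h D F := by
  simp only [isColumnSeq_iff, Fin.forall_fin_succ', Fin.snoc_castSucc, Fin.snoc_last,
    Fin.castSucc_lt_castSucc_iff, Fin.castSucc_lt_last, Fin.val_castSucc, Fin.val_last, lt_irrefl,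
    Fin.not_lt.2 (Fin.le_last _), false_imp_iff, forall_const, and_true, implies_true]
  constructor
  · rintro ⟨⟨h_card, h_last⟩, h_le, h_C⟩
    exact ⟨⟨h_last, h_C.2⟩, h_card, fun j => (h_le j).1, fun j => (h_le j).2⟩
  · rintro ⟨⟨h_last, hDC⟩, h_card, h_le, h_D⟩
    exact ⟨⟨h_card, h_last⟩, fun j => ⟨h_le j, h_D j⟩, fun j v => (hDC v).trans (h_D j v), hDC⟩

open Classical in
theorem columnSum_eq_sum (h : ℕ → ℕ) (m : ℕ) (C : Finset (Fin n)) :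
    columnSum R h m C =
      ∑ F : Fin m → Finset (Fin n) with IsColumnSeq h C F, ∏ j, columnMonomial R (F j) := by
  induction m generalizing C with
  | zero => simp [columnSum, isColumnSeq_iff]
  | succ m ih =>
    rw [columnSum, sum_filter, sum_filter,
      ← (Fin.snocEquiv fun _ : Fin (m + 1) => Finset (Fin n)).sum_comp, Fintype.sum_prod_type]
    refine sum_congr rfl fun D _ => ?_
    have h_snoc (F : Fin m → Finset (Fin n)) :
        Fin.snocEquiv (fun _ => Finset (Fin n)) (D, F) = Fin.snoc F D := rfl
    simp only [h_snoc, isColumnSeq_snoc, Fin.prod_univ_castSucc, Fin.snoc_castSucc,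
      Fin.snoc_last, ite_and]
    split_ifs
    · rw [ih, mul_sum, sum_filter]
      simp only [mul_comm]
    all_goals exact sum_const_zero.symm

end ColumnSequences

section Shapes

variable {k : ℕ} {lam : ℕ → ℤ} {i j : ℕ}

/-- The height of the `j`-th column of the shape `(lam 0, …, lam (k - 1))`; a partition has
`(lam 0).toNat` nonempty columns, or none if `k = 0`. -/
def colHeight (k : ℕ) (lam : ℕ → ℤ) (j : ℕ) : ℕ := #{i : Fin k | (j : ℤ) < lam i}

theorem colHeight_le (k : ℕ) (lam : ℕ → ℤ) (j : ℕ) : colHeight k lam j ≤ k :=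
  card_finset_fin_le _

theorem colHeight_antitone (k : ℕ) (lam : ℕ → ℤ) : Antitone (colHeight k lam) :=
  fun j₁ j₂ hj => card_le_card <| monotone_filter_right _ fun i _ (hi : (j₂ : ℤ) < lam i) =>
    (by omega : (j₁ : ℤ) < lam i)

theorem _root_.IsPartitionSeq.antitoneOn (hp : IsPartitionSeq k lam) :
    AntitoneOn lam (Set.Iio k) :=
  antitoneOn_of_succ_le Set.ordConnected_Iio fun i _ _ hi => hp.1 i hi

theorem lt_colHeight_iff (hp : IsPartitionSeq k lam) :
    i < colHeight k lam j ↔ i < k ∧ (j : ℤ) < lam i := by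
  have h_lower : IsLowerSet (({i : Fin k | (j : ℤ) < lam i} : Finset (Fin k)) : Set (Fin k)) :=
    fun q p hpq hq => by
      simp only [mem_coe, mem_filter_univ] at hq ⊢
      exact hq.trans_le (hp.antitoneOn p.2 q.2 hpq)
  have h_iff (i : Fin k) : i < colHeight k lam j ↔ (j : ℤ) < lam i := by
    rw [colHeight, ← mem_initialColumn, ← eq_initialColumn_of_isLowerSet h_lower, mem_filter_univ]
  refine ⟨fun hi => ?_, fun hi => (h_iff ⟨i, hi.1⟩).2 hi.2⟩
  have hik : i < k := hi.trans_le (colHeight_le k lam j)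
  exact ⟨hik, (h_iff ⟨i, hik⟩).1 hi⟩

theorem lt_toNat_of_lt_colHeight (hp : IsPartitionSeq k lam) (hi : i < colHeight k lam j) :
    j < (lam 0).toNat := by
  obtain ⟨hik, hj⟩ := (lt_colHeight_iff hp).1 hi
  have := hp.antitoneOn (Set.mem_Iio.2 (i.zero_le.trans_lt hik)) (Set.mem_Iio.2 hik) i.zero_le
  omega

theorem card_filter_lt_colHeight (hp : IsPartitionSeq k lam) (i : ℕ) :
    #{j ∈ range (lam 0).toNat | i < colHeight k lam j} = if i < k then (lam i).toNat else 0 := by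
  rw [← card_range (if i < k then (lam i).toNat else 0)]
  congr 1
  ext j
  rw [mem_filter, mem_range, mem_range,
    and_iff_right_of_imp (lt_toNat_of_lt_colHeight hp), lt_colHeight_iff hp]
  split_ifs <;> omega

end Shapes

section Tableaux

variable {n k : ℕ} {lam : ℕ → ℤ}

theorem ssyt_ext {a b : ℕ} {T T' : SSYT k lam a b} (h : T.entry = T'.entry) : T = T' := by
  cases T
  cases T'
  cases h
  rfl

/-- The entries in the `j`-th column of a tableau with entries in `{1, …, n}`, as a column. -/
def tableauColumn (T : SSYT k lam 1 n) (j : ℕ) : Finset (Fin n) :=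
  columnOfEntries n (colHeight k lam j) (T.entry · j)

theorem entry_lt_entry_of_lt_colHeight (hp : IsPartitionSeq k lam) (T : SSYT k lam 1 n)
    {j i₁ i₂ : ℕ} (h : i₁ < i₂) (hi₂ : i₂ < colHeight k lam j) :
    T.entry i₁ j < T.entry i₂ j :=
  have ⟨hk, hj⟩ := (lt_colHeight_iff hp).1 hi₂
  T.col_strict i₁ i₂ j h hk hj

theorem entry_mem_of_lt_colHeight (hp : IsPartitionSeq k lam) (T : SSYT k lam 1 n) {i j : ℕ}
    (hi : i < colHeight k lam j) :
    1 ≤ T.entry i j ∧ T.entry i j ≤ n :=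
  have ⟨hk, hj⟩ := (lt_colHeight_iff hp).1 hi
  ⟨T.lower i j hk hj, T.upper i j hk hj⟩

theorem card_tableauColumn (hp : IsPartitionSeq k lam) (T : SSYT k lam 1 n) (j : ℕ) :
    #(tableauColumn T j) = colHeight k lam j :=
  card_columnOfEntries (fun _ _ => entry_lt_entry_of_lt_colHeight hp T)
    fun _ => entry_mem_of_lt_colHeight hp T

theorem columnEntry_tableauColumn (hp : IsPartitionSeq k lam) (T : SSYT k lam 1 n) (i j : ℕ) :
    columnEntry (tableauColumn T j) i = T.entry i j := by
  by_cases hi : i < colHeight k lam j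
  · exact columnEntry_columnOfEntries (fun _ _ => entry_lt_entry_of_lt_colHeight hp T)
      (fun _ => entry_mem_of_lt_colHeight hp T) hi
  · rw [columnEntry_of_ge (by rw [card_tableauColumn hp T]; omega),
      T.zero_outside i j (mt (lt_colHeight_iff hp).2 hi)]

theorem isColumnSeq_tableauColumn (hp : IsPartitionSeq k lam) (T : SSYT k lam 1 n) (m : ℕ) :
    IsColumnSeq (colHeight k lam) ∅ fun j : Fin m => tableauColumn T j where
  card_eq j := card_tableauColumn hp T j
  columnLE j j' hj := by
    rw [columnLE_iff_columnEntry_le]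
    simp only [card_tableauColumn hp, columnEntry_tableauColumn hp]
    refine ⟨colHeight_antitone k lam hj.le, fun i hi => ?_⟩
    obtain ⟨hik, hij⟩ := (lt_colHeight_iff hp).1 hi
    exact T.row_weak i j j' hik hj.le hij
  columnLE_right j v := by simp [countLT]

/-- The tableau with the given sequence of columns. -/
def tableauOfColumns (hp : IsPartitionSeq k lam) {F : Fin (lam 0).toNat → Finset (Fin n)}
    (hF : IsColumnSeq (colHeight k lam) ∅ F) : SSYT k lam 1 n where
  entry i j := if hj : j < (lam 0).toNat then columnEntry (F ⟨j, hj⟩) i else 0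
  zero_outside i j hij := by
    rw [← lt_colHeight_iff hp, not_lt] at hij
    split_ifs with hj
    · exact columnEntry_of_ge (hF.card_eq ⟨j, hj⟩ ▸ hij)
    · rfl
  lower i j hi hj := by
    have hij := (lt_colHeight_iff hp).2 ⟨hi, hj⟩
    have hj' := lt_toNat_of_lt_colHeight hp hij
    rw [dif_pos hj']
    exact one_le_columnEntry (hij.trans_eq (hF.card_eq ⟨j, hj'⟩).symm)
  upper i j _ _ := by
    split_ifs
    · exact columnEntry_le _ i
    · exact n.zero_le
  row_weak i j₁ j₂ hi hj hj₂ := by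
    have hij := (lt_colHeight_iff hp).2 ⟨hi, hj₂⟩
    have hj₂' := lt_toNat_of_lt_colHeight hp hij
    rw [dif_pos hj₂', dif_pos (hj.trans_lt hj₂')]
    rcases hj.eq_or_lt with rfl | h_lt
    · exact le_rfl
    · exact (columnLE_iff_columnEntry_le.1 (hF.columnLE ⟨j₁, _⟩ ⟨j₂, hj₂'⟩ h_lt)).2 i
        (hij.trans_eq (hF.card_eq ⟨j₂, hj₂'⟩).symm)
  col_strict i₁ i₂ j hi hi₂ hj := by
    have hij := (lt_colHeight_iff hp).2 ⟨hi₂, hj⟩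
    have hj' := lt_toNat_of_lt_colHeight hp hij
    rw [dif_pos hj', dif_pos hj']
    exact columnEntry_lt_columnEntry hi (hij.trans_eq (hF.card_eq ⟨j, hj'⟩).symm)

/-- A semistandard tableau is the same as its sequence of columns. -/
def tableauEquivColumns (n : ℕ) (hp : IsPartitionSeq k lam) :
    SSYT k lam 1 n ≃
      {F : Fin (lam 0).toNat → Finset (Fin n) // IsColumnSeq (colHeight k lam) ∅ F} where
  toFun T := ⟨fun j => tableauColumn T j, isColumnSeq_tableauColumn hp T _⟩
  invFun F := tableauOfColumns hp F.2
  left_inv T := by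
    refine ssyt_ext (funext₂ fun i j => ?_)
    simp only [tableauOfColumns, columnEntry_tableauColumn hp, dite_eq_ite, ite_eq_left_iff]
    intro hj
    refine (T.zero_outside i j fun hij => hj ?_).symm
    exact lt_toNat_of_lt_colHeight hp ((lt_colHeight_iff hp).2 hij)
  right_inv F := by
    refine Subtype.ext (funext fun j => ?_)
    ext v
    simp only [tableauColumn, columnOfEntries, tableauOfColumns, mem_filter_univ, j.2, dif_pos,
      mem_iff_exists_columnEntry_eq, F.2.card_eq]

theorem finite_ssyt (n : ℕ) (hp : IsPartitionSeq k lam) : Finite (SSYT k lam 1 n) :=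
  .of_equiv _ (tableauEquivColumns n hp).symm

theorem weight_eq_rename_prod_columnMonomial (hp : IsPartitionSeq k lam) (T : SSYT k lam 1 n) :
    T.weight = rename (fun i : Fin n => i.val + 1)
      (∏ j : Fin (lam 0).toNat, columnMonomial ℤ (tableauColumn T j)) := by
  simp only [map_prod, rename_columnMonomial, card_tableauColumn hp, columnEntry_tableauColumn hp]
  rw [Fin.prod_univ_eq_prod_range (fun j => ∏ i ∈ range (colHeight k lam j), X (T.entry i j)),
    SSYT.weight]
  refine prod_comm' fun i j => ?_
  simp only [mem_range]
  rw [and_iff_left_of_imp (lt_toNat_of_lt_colHeight hp), lt_colHeight_iff hp, Int.lt_toNat]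

theorem schur_eq_finsum (hp : IsPartitionSeq k lam) (a b : ℕ) :
    schur k lam a b = ∑ᶠ T : SSYT k lam a b, T.weight :=
  if_pos hp

theorem schur_eq_zero (hp : ¬IsPartitionSeq k lam) (a b : ℕ) : schur k lam a b = 0 :=
  if_neg hp

theorem schur_eq_rename_columnSum (n : ℕ) (hp : IsPartitionSeq k lam) :
    schur k lam 1 n = rename (fun i : Fin n => i.val + 1)
      (columnSum ℤ (colHeight k lam) (lam 0).toNat ∅) := by
  classical
  rw [schur_eq_finsum hp, columnSum_eq_sum, sum_subtype _ (fun F => mem_filter_univ F), map_sum,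
    ← finsum_eq_sum_of_fintype, ← finsum_comp_equiv (tableauEquivColumns n hp)]
  exact finsum_congr fun T => weight_eq_rename_prod_columnMonomial hp T

end Tableaux

section Positivity

variable {n k l : ℕ} {lam mu : ℕ → ℤ}

/-- The variables `x_1, …, x_n`, indexed by `Fin n`. -/
noncomputable def schurVars (n : ℕ) : Fin n → MvPolynomial ℕ ℤ := fun i => X (i + 1)

/-- The exponent vector `λ + ρ` of the bialternant formula, where `ρ` is the staircase. -/
def shapeExponent (n k : ℕ) (lam : ℕ → ℤ) : Fin n → ℕ :=
  fun i => staircase n i + if i < k then (lam i).toNat else 0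

theorem rename_comp_X (n : ℕ) :
    (rename fun i : Fin n => i.val + 1 : MvPolynomial (Fin n) ℤ →ₐ[ℤ] _).toRingHom ∘ X =
      schurVars n :=
  funext fun _ => rename_X _ _

theorem schurVars_injective (n : ℕ) : Function.Injective (schurVars n) := fun _ _ hij =>
  Fin.ext (Nat.succ_injective (X_injective hij))

theorem prod_schurVars_ne_zero (n : ℕ) : ∏ i, schurVars n i ≠ 0 :=
  prod_ne_zero_iff.2 fun _ _ => X_ne_zero _

theorem strictAnti_shapeExponent (hp : IsPartitionSeq k lam) :
    StrictAnti (shapeExponent n k lam) := by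
  intro p q hpq
  have h_stair := strictAnti_staircase n hpq
  simp only [shapeExponent]
  split_ifs with hqk hpk hpk
  · have := hp.antitoneOn (Set.mem_Iio.2 hpk) (Set.mem_Iio.2 hqk) (Fin.le_def.1 hpq.le)
    omega
  all_goals omega

theorem exists_shapeExponent_eq {β : Fin n → ℕ} (hβ : StrictAnti β) :
    ∃ lam, IsPartitionSeq n lam ∧ shapeExponent n n lam = β := by
  have h_anti := antitone_add_val_of_strictAnti hβ
  have h_le (i : Fin n) : n ≤ β i + i + 1 := by
    have := h_anti (Fin.le_def.2 (Nat.le_sub_one_of_lt i.2) : i ≤ ⟨n - 1, by have := i.2; omega⟩)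
    simp only at this
    omega
  refine ⟨fun i => if hi : i < n then (β ⟨i, hi⟩ + i + 1 - n : ℤ) else 0,
    ⟨fun i hi => ?_, fun i hi => ?_⟩, funext fun i => ?_⟩
  · have := h_anti (Fin.le_def.2 i.le_succ : ⟨i, Nat.lt_of_succ_lt hi⟩ ≤ (⟨i + 1, hi⟩ : Fin n))
    simp only at this
    simp only [hi, dif_pos, Nat.lt_of_succ_lt hi]
    omega
  · have := h_le ⟨i, hi⟩
    simp only at this
    simp only [hi, dif_pos]
    omega
  · have := h_le i
    simp only [shapeExponent, staircase, i.2, dif_pos, if_pos, Fin.eta]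
    omega

theorem alternant_staircase_mul_schur (hp : IsPartitionSeq k lam) (hk : k ≤ n) :
    alternant (schurVars n) (staircase n) * schur k lam 1 n =
      alternant (schurVars n) (shapeExponent n k lam) := by
  rw [schur_eq_rename_columnSum n hp, ← rename_comp_X, ← map_alternant, ← map_alternant]
  refine (map_mul _ _ _).symm.trans (congrArg _ ?_)
  rw [alternant_staircase_mul_columnSum (colHeight_antitone k lam)
    fun j => (colHeight_le k lam j).trans hk]
  simp only [card_filter_lt_colHeight hp]
  rfl

theorem alternant_mul_schur_mem_alternantCone {β : Fin n → ℕ} (hβ : StrictAnti β) (k : ℕ)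
    (lam : ℕ → ℤ) :
    alternant (schurVars n) β * schur k lam 1 n ∈ alternantCone (schurVars n) := by
  by_cases hp : IsPartitionSeq k lam
  · have h_mem := alternation_mul_columnSum_mem_alternantCone (R := ℤ)
      (colHeight k lam) (lam 0).toNat hβ ∅
    rw [← alternant_mul_columnSum] at h_mem
    rw [schur_eq_rename_columnSum n hp, ← rename_comp_X, ← map_alternant]
    exact Set.mem_of_eq_of_mem (map_mul _ _ _).symm (map_mem_alternantCone _ h_mem)
  · rw [schur_eq_zero hp, mul_zero]
    exact zero_mem _

theorem schurPositive_zero (n : ℕ) : SchurPositive n 0 := ⟨[], by simp, by simp⟩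

theorem schurPositive_schur (n : ℕ) (hp : IsPartitionSeq k lam) :
    SchurPositive n (schur k lam 1 n) :=
  ⟨[(k, lam)], by simpa using hp, by simp⟩

theorem _root_.SchurPositive.add {f g : MvPolynomial ℕ ℤ} (hf : SchurPositive n f)
    (hg : SchurPositive n g) : SchurPositive n (f + g) := by
  obtain ⟨L, hL, rfl⟩ := hf
  obtain ⟨M, hM, rfl⟩ := hg
  refine ⟨L ++ M, fun p hp => ?_, by rw [List.map_append, List.sum_append]⟩
  exact (List.mem_append.1 hp).elim (hL p) (hM p)

theorem exists_schurPositive_of_mem_alternantCone {f : MvPolynomial ℕ ℤ}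
    (hf : f ∈ alternantCone (schurVars n)) :
    ∃ g, SchurPositive n g ∧ alternant (schurVars n) (staircase n) * g = f := by
  induction hf using AddSubmonoid.closure_induction with
  | mem f hf =>
    obtain ⟨β, hβ, rfl⟩ := hf
    obtain ⟨lam, hp, rfl⟩ := exists_shapeExponent_eq hβ
    exact ⟨_, schurPositive_schur n hp, alternant_staircase_mul_schur hp le_rfl⟩
  | zero => exact ⟨0, schurPositive_zero n, mul_zero _⟩
  | add f₁ f₂ _ _ ih₁ ih₂ =>
    obtain ⟨g₁, hg₁, rfl⟩ := ih₁
    obtain ⟨g₂, hg₂, rfl⟩ := ih₂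
    exact ⟨g₁ + g₂, hg₁.add hg₂, mul_add _ _ _⟩

theorem schurPositive_of_alternant_mul_mem {g : MvPolynomial ℕ ℤ}
    (hg : alternant (schurVars n) (staircase n) * g ∈ alternantCone (schurVars n)) :
    SchurPositive n g := by
  obtain ⟨g', hg', h_eq⟩ := exists_schurPositive_of_mem_alternantCone hg
  exact mul_left_cancel₀ (alternant_staircase_ne_zero (schurVars_injective n)) h_eq ▸ hg'

theorem schur_eq_of_shapeExponent_eq (hp : IsPartitionSeq k lam) (hk : k ≤ n)
    (hq : IsPartitionSeq l mu) (hl : l ≤ n)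
    (h : ∀ i, shapeExponent n k lam i = shapeExponent n l mu i) :
    schur k lam 1 n = schur l mu 1 n := by
  refine mul_left_cancel₀ (alternant_staircase_ne_zero (schurVars_injective n)) ?_
  rw [alternant_staircase_mul_schur hp hk, alternant_staircase_mul_schur hq hl, funext h]

end Positivity

section Truncation

variable {n N k : ℕ} {lam : ℕ → ℤ}

/-- The specialization `x_i = 0` for all `i > n`. -/
noncomputable def truncate (n : ℕ) : MvPolynomial ℕ ℤ →ₐ[ℤ] MvPolynomial ℕ ℤ :=
  aeval fun i => if i ≤ n then X i else 0

/-- A tableau with entries in `{1, …, n}`, regarded as one with entries in `{1, …, N}`. -/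
def extendRange (h : n ≤ N) (T : SSYT k lam 1 n) : SSYT k lam 1 N :=
  { T with upper := fun i j hi hj => (T.upper i j hi hj).trans h }

theorem extendRange_injective (h : n ≤ N) :
    Function.Injective (extendRange h : SSYT k lam 1 n → SSYT k lam 1 N) :=
  fun _ _ h_eq => ssyt_ext (congrArg SSYT.entry h_eq :)

theorem truncate_weight_extendRange (h : n ≤ N) (T : SSYT k lam 1 n) :
    truncate n (extendRange h T).weight = T.weight := by
  simp only [SSYT.weight, extendRange, truncate, map_prod, aeval_X]
  refine prod_congr rfl fun i hi => prod_congr rfl fun j hj => ?_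
  exact if_pos (T.upper i j (mem_range.1 hi) (Int.lt_toNat.1 (mem_range.1 hj)))

theorem truncate_weight_eq_zero (h : n ≤ N) {T : SSYT k lam 1 N}
    (hT : T ∉ Set.range (extendRange h)) : truncate n T.weight = 0 := by
  obtain ⟨i, j, hi, hj, h_lt⟩ : ∃ i j : ℕ, i < k ∧ (j : ℤ) < lam i ∧ n < T.entry i j := by
    contrapose! hT
    exact ⟨{ T with upper := hT }, ssyt_ext rfl⟩
  simp only [SSYT.weight, truncate, map_prod, aeval_X]
  refine prod_eq_zero (mem_range.2 hi) (prod_eq_zero (mem_range.2 (Int.lt_toNat.2 hj)) ?_)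
  exact if_neg h_lt.not_ge

theorem truncate_schur (h : n ≤ N) (k : ℕ) (lam : ℕ → ℤ) :
    truncate n (schur k lam 1 N) = schur k lam 1 n := by
  classical
  by_cases hp : IsPartitionSeq k lam
  · have := finite_ssyt N hp
    rw [schur_eq_finsum hp, schur_eq_finsum hp]
    calc truncate n (∑ᶠ T : SSYT k lam 1 N, T.weight)
        = ∑ᶠ T : SSYT k lam 1 N, truncate n T.weight :=
          (truncate n).toAddMonoidHom.map_finsum (Set.toFinite _)
      _ = ∑ᶠ T ∈ Set.range (extendRange h), truncate n T.weight := by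
          refine finsum_congr fun T => ?_
          by_cases hT : T ∈ Set.range (extendRange h)
          · rw [finsum_eq_if, if_pos hT]
          · rw [finsum_eq_if, if_neg hT, truncate_weight_eq_zero h hT]
      _ = ∑ᶠ T : SSYT k lam 1 n, T.weight := by
          rw [finsum_mem_range (extendRange_injective h)]
          exact finsum_congr (truncate_weight_extendRange h)
  · rw [schur_eq_zero hp, schur_eq_zero hp, map_zero]

theorem _root_.SchurPositive.truncate {f : MvPolynomial ℕ ℤ} (hf : SchurPositive N f)
    (h : n ≤ N) : SchurPositive n (truncate n f) := by
  obtain ⟨L, hL, rfl⟩ := hf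
  refine ⟨L, hL, ?_⟩
  simp only [map_list_sum, List.map_map, Function.comp_def, truncate_schur h]

theorem schurPositive_schur_mul_schur (n k l : ℕ) (lam mu : ℕ → ℤ) :
    SchurPositive n (schur k lam 1 n * schur l mu 1 n) := by
  by_cases hp : IsPartitionSeq k lam
  · have h_mem := alternant_mul_schur_mem_alternantCone
      (strictAnti_shapeExponent (n := max n k) hp) l mu
    rw [← alternant_staircase_mul_schur hp (le_max_right n k), mul_assoc] at h_mem
    have h_pos := (schurPositive_of_alternant_mul_mem h_mem).truncate (le_max_left n k)
    rwa [map_mul, truncate_schur (le_max_left n k), truncate_schur (le_max_left n k)] at h_pos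
  · rw [schur_eq_zero hp, zero_mul]
    exact schurPositive_zero n

end Truncation

section Plucker

variable {A : Type*} [CommRing A] {n : ℕ}

theorem det_smul_eq_sum_det_updateRow_smul {ι : Type*} [Fintype ι] [DecidableEq ι]
    (M : Matrix ι ι A) (v : ι → A) : M.det • v = ∑ i, (M.updateRow i v).det • M i := by
  have h_cramer := M.transpose.mulVec_cramer v
  rw [M.det_transpose] at h_cramer
  rw [← h_cramer]
  funext j
  simp only [Matrix.mulVec, dotProduct, Matrix.cramer_transpose_apply, Finset.sum_apply,
    Pi.smul_apply, smul_eq_mul, Matrix.transpose_apply, mul_comm]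

theorem det_mul_det_updateRow {ι : Type*} [Fintype ι] [DecidableEq ι] (M M' : Matrix ι ι A)
    (p : ι) (v : ι → A) :
    M.det * (M'.updateRow p v).det = ∑ i, (M.updateRow i v).det * (M'.updateRow p (M i)).det := by
  have h_cramer := congrArg (M'.transpose.cramer · p) (det_smul_eq_sum_det_updateRow_smul M v)
  simp only [map_smul, map_sum, Pi.smul_apply, Finset.sum_apply, smul_eq_mul] at h_cramer
  simpa only [Matrix.cramer_transpose_apply] using h_cramer

theorem det_updateRow_updateRow_swap {ι : Type*} [Fintype ι] [DecidableEq ι] (M : Matrix ι ι A)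
    {p q : ι} (hpq : p ≠ q) (x y : ι → A) :
    ((M.updateRow p x).updateRow q y).det = -((M.updateRow p y).updateRow q x).det := by
  have h_rows : (M.updateRow p x).updateRow q y =
      ((M.updateRow p y).updateRow q x).submatrix (Equiv.swap p q) id := by
    ext i j
    simp only [Matrix.submatrix_apply, Matrix.updateRow_apply, Equiv.swap_apply_def, id]
    grind
  simp [h_rows, Matrix.det_permute, Equiv.Perm.sign_swap hpq]

theorem det_updateRow_three_term {ι : Type*} [Fintype ι] [DecidableEq ι] (M : Matrix ι ι A)
    {p q : ι} (hpq : p ≠ q) (x y z w : ι → A) :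
    ((M.updateRow p x).updateRow q y).det * ((M.updateRow p z).updateRow q w).det -
      ((M.updateRow p x).updateRow q z).det * ((M.updateRow p y).updateRow q w).det +
      ((M.updateRow p x).updateRow q w).det * ((M.updateRow p y).updateRow q z).det = 0 := by
  have h_exchange := det_mul_det_updateRow ((M.updateRow p x).updateRow q y) (M.updateRow q w) p z
  rw [Fintype.sum_eq_add p q hpq] at h_exchange
  · simp only [Matrix.updateRow_comm _ hpq.symm, Matrix.updateRow_idem, Matrix.updateRow_self,
      Matrix.updateRow_ne hpq] at h_exchange
    rw [det_updateRow_updateRow_swap M hpq z y] at h_exchange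
    linear_combination h_exchange
  · rintro i ⟨hip, hiq⟩
    refine mul_eq_zero_of_right _ (Matrix.det_zero_of_row_eq hip ?_)
    simp [Matrix.updateRow_ne, hip, hiq]

/-- The sequence `f` with `a` inserted at position `p`. -/
def insertAt (p a : ℕ) (f : ℕ → ℕ) : ℕ → ℕ :=
  fun i => if i < p then f i else if i = p then a else f (i - 1)

theorem insertAt_zero_insertAt (p a b : ℕ) (f : ℕ → ℕ) :
    insertAt 0 a (insertAt p b f) = insertAt (p + 1) b (insertAt 0 a f) := by
  funext i
  simp only [insertAt]
  grind

theorem alternant_insertAt (x : Fin n → A) {p : ℕ} (hp : p < n) (a : ℕ) (f : ℕ → ℕ) :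
    (alternant x fun i => insertAt p a f i) = (-1) ^ p * alternant x fun i => insertAt 0 a f i := by
  have h_cycle : (Matrix.of fun i j : Fin n => x j ^ insertAt p a f i) =
      (Matrix.of fun i j : Fin n => x j ^ insertAt 0 a f i).submatrix
        (Fin.cycleRange ⟨p, hp⟩) id := by
    ext i j
    rcases lt_trichotomy i ⟨p, hp⟩ with h | rfl | h
    · rw [Fin.lt_def] at h
      simp [insertAt, Fin.coe_cycleRange_of_lt h, h]
    · have : NeZero n := ⟨by omega⟩
      simp [insertAt]
    · rw [Fin.lt_def] at h
      simp [insertAt, Fin.cycleRange_of_gt h, h.not_gt, h.ne', (p.zero_le.trans_lt h).ne']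
  rw [alternant, h_cycle, Matrix.det_permute, Fin.sign_cycleRange, ← alternant]
  simp

theorem alternant_insertAt_insertAt (x : Fin n → A) {p q : ℕ} (hp : p < n) (hq : q + 1 < n)
    (a b : ℕ) (f : ℕ → ℕ) :
    (alternant x fun i => insertAt p a (insertAt q b f) i) =
      (-1) ^ (p + q) * alternant x fun i => insertAt 0 a (insertAt 0 b f) i := by
  rw [alternant_insertAt x hp, insertAt_zero_insertAt q, alternant_insertAt x hq,
    insertAt_zero_insertAt 0, alternant_insertAt x (by omega : 0 + 1 < n)]
  ring

theorem alternant_three_term (x : Fin n → A) {p q r s : ℕ} (hp : p + 1 < n) (hq : q + 1 < n)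
    (hr : r + 1 < n) (hs : s + 1 < n) (a b c d : ℕ) (f : ℕ → ℕ) :
    (alternant x fun i => insertAt p a (insertAt q b f) i) *
        (alternant x fun i => insertAt r c (insertAt s d f) i) -
      (alternant x fun i => insertAt p a (insertAt r c f) i) *
        (alternant x fun i => insertAt q b (insertAt s d f) i) +
      (alternant x fun i => insertAt p a (insertAt s d f) i) *
        (alternant x fun i => insertAt q b (insertAt r c f) i) = 0 := by
  have h_rows (a b : ℕ) : (alternant x fun i => insertAt 0 a (insertAt 0 b f) i) =
      (((Matrix.of fun i j : Fin n => x j ^ f (i - 2)).updateRow ⟨0, by omega⟩ (x · ^ a)).updateRow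
        ⟨1, by omega⟩ (x · ^ b)).det := by
    rw [alternant]
    congr 1
    ext i j
    simp only [insertAt, Matrix.updateRow_apply, Matrix.of_apply, Fin.ext_iff]
    grind
  have h_det := det_updateRow_three_term (Matrix.of fun i j : Fin n => x j ^ f (i - 2))
    (p := ⟨0, by omega⟩) (q := ⟨1, by omega⟩) (by simp) (x · ^ a) (x · ^ b) (x · ^ c) (x · ^ d)
  simp only [← h_rows] at h_det
  simp only [alternant_insertAt_insertAt x (Nat.lt_of_succ_lt _), hp, hq, hr, hs]
  linear_combination (-1) ^ (p + q + r + s) * h_det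

theorem alternant_add_one (x : Fin n → A) (β : Fin n → ℕ) :
    (alternant x fun i => β i + 1) = (∏ i, x i) * alternant x β := by
  rw [alternant, alternant, ← Matrix.det_mul_row]
  simp only [Matrix.of_apply, pow_succ']

end Plucker

section Rectangles

variable {A : Type*} [CommRing A] {n r t c : ℕ}

/-- The shape with `t` rows of length `a`, all further rows having length `b`. -/
def stepShape (t : ℕ) (a b : ℤ) : ℕ → ℤ := fun j => if j < t then a else b

theorem isPartitionSeq_const (k : ℕ) {a : ℤ} (ha : 0 ≤ a) : IsPartitionSeq k fun _ => a :=
  ⟨fun _ _ => le_rfl, fun _ _ => ha⟩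

theorem isPartitionSeq_stepShape (k t : ℕ) {a b : ℤ} (hab : b ≤ a) (hb : 0 ≤ b) :
    IsPartitionSeq k (stepShape t a b) := by
  constructor <;> intro i _ <;> simp only [stepShape] <;> split_ifs <;> omega

/-- The shape `(c^t, (c - 1)^{r - t - 2}, c - 2)`, followed by further rows of length `c - 2`. -/
def twoStepShape (r t : ℕ) (c : ℤ) : ℕ → ℤ :=
  fun j => if j < t then c else if j < r - 2 then c - 1 else c - 2

theorem alternant_three_term_rect_twoStep (x : Fin n → A) (hc : 2 ≤ c) (ht : t + 2 ≤ r)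
    (hr : r ≤ n) :
    alternant x (shapeExponent n r fun _ => c) *
        alternant x (shapeExponent n (r - 1) (twoStepShape r t c)) -
      alternant x (shapeExponent n r (stepShape (r - 1) c (c - 1))) *
        alternant x (shapeExponent n (r - 1) (stepShape t c (c - 1))) +
      alternant x (shapeExponent n (r - 1) fun _ => c) *
        alternant x (shapeExponent n r (stepShape t c (c - 1))) = 0 := by
  -- `f` is the part common to all six exponent vectors; each of them inserts two of four values.
  convert alternant_three_term x (p := t) (q := r - 2) (r := r - 2)
    (s := r - 2) (by omega) (by omega) (by omega) (by omega)
    (c + n - 1 - t) (c + n - r) (c + n - r - 1) (n - r)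
    fun i => if i < t then c + n - 1 - i else if i < r - 2 then c + n - 2 - i else n - 3 - i
  all_goals
    simp only [insertAt, shapeExponent, staircase, stepShape, twoStepShape]
    grind

theorem alternant_three_term_rect_step (x : Fin n → A) (hc : 1 ≤ c) (ht : 1 ≤ t) (htr : t < r)
    (hr : r ≤ n) :
    (alternant x fun i => shapeExponent n r (fun _ => c) i + 1) *
        alternant x (shapeExponent n (r - 1) (stepShape (t - 1) c (c - 1))) -
      (alternant x fun i => shapeExponent n r (stepShape t c (c - 1)) i + 1) *
        alternant x (shapeExponent n (r - 1) fun _ => c) +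
      alternant x (shapeExponent n (r - 1) (stepShape t (c + 1) c)) *
        (alternant x fun i => shapeExponent n r (fun _ => (c : ℤ) - 1) i + 1) = 0 := by
  -- Shifting the exponents of the shapes with `r` rows by `1` removes the value `0` from them, so
  -- that `0` can serve as one of the four inserted values.
  convert alternant_three_term x (p := 0) (q := t - 1) (r := r - 2)
    (s := n - 2) (by omega) (by omega) (by omega) (by omega) (c + n) (c + n - t) (c + n - r) 0
    fun i => if i < t - 1 then c + n - 1 - i else if i < r - 2 then c + n - 2 - i else n - 2 - i
  all_goals
    simp only [insertAt, shapeExponent, staircase, stepShape]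
    grind

theorem schur_rect_mul_schur_twoStep (hc : 2 ≤ c) (ht : t + 2 ≤ r) (hr : r ≤ n) :
    schur r (fun _ => (c : ℤ)) 1 n * schur (r - 1) (twoStepShape r t c) 1 n =
      schur r (stepShape (r - 1) c (c - 1)) 1 n * schur (r - 1) (stepShape t c (c - 1)) 1 n -
        schur r (stepShape t c (c - 1)) 1 n * schur (r - 1) (fun _ => (c : ℤ)) 1 n := by
  have h_twoStep : IsPartitionSeq (r - 1) (twoStepShape r t c) := by
    constructor <;> intro i _ <;> simp only [twoStepShape] <;> split_ifs <;> omega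
  have h_step (k t : ℕ) : IsPartitionSeq k (stepShape t c (c - 1)) :=
    isPartitionSeq_stepShape k t (by omega) (by omega)
  have h_rect (k : ℕ) : IsPartitionSeq k fun _ => (c : ℤ) := isPartitionSeq_const k (by omega)
  have h_alternant := alternant_three_term_rect_twoStep (schurVars n) hc ht hr
  have hr' := (r.sub_le 1).trans hr
  rw [← alternant_staircase_mul_schur (h_rect r) hr,
    ← alternant_staircase_mul_schur h_twoStep hr',
    ← alternant_staircase_mul_schur (h_step r _) hr,
    ← alternant_staircase_mul_schur (h_step (r - 1) t) hr',
    ← alternant_staircase_mul_schur (h_rect (r - 1)) hr',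
    ← alternant_staircase_mul_schur (h_step r t) hr] at h_alternant
  refine mul_left_cancel₀ (pow_ne_zero 2 (alternant_staircase_ne_zero (schurVars_injective n))) ?_
  linear_combination h_alternant

theorem schur_rect_mul_schur_step (hc : 1 ≤ c) (ht : 1 ≤ t) (htr : t < r) (hr : r ≤ n) :
    schur r (fun _ => (c : ℤ)) 1 n * schur (r - 1) (stepShape (t - 1) c (c - 1)) 1 n =
      schur r (stepShape t c (c - 1)) 1 n * schur (r - 1) (fun _ => (c : ℤ)) 1 n -
        schur r (fun _ => (c : ℤ) - 1) 1 n * schur (r - 1) (stepShape t (c + 1) c) 1 n := by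
  have h_step (k t : ℕ) : IsPartitionSeq k (stepShape t c (c - 1)) :=
    isPartitionSeq_stepShape k t (by omega) (by omega)
  have h_step_succ : IsPartitionSeq (r - 1) (stepShape t (c + 1) c) :=
    isPartitionSeq_stepShape _ t (by omega) (by omega)
  have h_rect (k : ℕ) : IsPartitionSeq k fun _ => (c : ℤ) := isPartitionSeq_const k (by omega)
  have h_rect_pred : IsPartitionSeq r fun _ => (c : ℤ) - 1 := isPartitionSeq_const r (by omega)
  have h_alternant := alternant_three_term_rect_step (schurVars n) hc ht htr hr
  have hr' := (r.sub_le 1).trans hr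
  rw [alternant_add_one, alternant_add_one, alternant_add_one,
    ← alternant_staircase_mul_schur (h_rect r) hr,
    ← alternant_staircase_mul_schur (h_step (r - 1) _) hr',
    ← alternant_staircase_mul_schur (h_step r t) hr,
    ← alternant_staircase_mul_schur (h_rect (r - 1)) hr',
    ← alternant_staircase_mul_schur h_step_succ hr',
    ← alternant_staircase_mul_schur h_rect_pred hr] at h_alternant
  refine mul_left_cancel₀ (mul_ne_zero (prod_schurVars_ne_zero n)
    (pow_ne_zero 2 (alternant_staircase_ne_zero (schurVars_injective n)))) ?_
  linear_combination h_alternant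

theorem schurPositive_schur_step_mul_sub (hc : 1 ≤ c) (ht : t < r) (hr : r ≤ n) :
    SchurPositive n
      (schur r (stepShape (r - 1) c (c - 1)) 1 n * schur (r - 1) (stepShape t c (c - 1)) 1 n -
        schur r (stepShape t c (c - 1)) 1 n * schur (r - 1) (fun _ => (c : ℤ)) 1 n) := by
  have h_step (k t : ℕ) : IsPartitionSeq k (stepShape t c (c - 1)) :=
    isPartitionSeq_stepShape k t (by omega) (by omega)
  have h_rect : IsPartitionSeq (r - 1) fun _ => (c : ℤ) := isPartitionSeq_const _ (by omega)
  have hr' := (r.sub_le 1).trans hr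
  rcases Nat.lt_or_ge (t + 1) r with ht' | ht'
  · rcases hc.eq_or_lt with rfl | hc'
    · rw [schur_eq_of_shapeExponent_eq (h_step r (r - 1)) hr h_rect hr',
        schur_eq_of_shapeExponent_eq (h_step (r - 1) t) hr' (h_step r t) hr, mul_comm, sub_self]
      · exact schurPositive_zero n
      all_goals
        intro i
        simp only [shapeExponent, stepShape]
        grind
    · rw [← schur_rect_mul_schur_twoStep hc' ht' hr]
      exact schurPositive_schur_mul_schur n _ _ _ _
  · obtain rfl : t = r - 1 := by omega
    rw [schur_eq_of_shapeExponent_eq (h_step (r - 1) (r - 1)) hr' h_rect hr', sub_self]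
    · exact schurPositive_zero n
    · intro i
      simp only [shapeExponent, stepShape]
      grind

theorem schurPositive_schur_step_mul_rect_sub (hc : 1 ≤ c) (ht : t < r) (hr : r ≤ n) :
    SchurPositive n
      (schur r (stepShape t c (c - 1)) 1 n * schur (r - 1) (fun _ => (c : ℤ)) 1 n -
        schur r (fun _ => (c : ℤ) - 1) 1 n * schur (r - 1) (stepShape t (c + 1) c) 1 n) := by
  rcases t.eq_zero_or_pos with rfl | ht'
  · have h_step (a b : ℤ) : stepShape 0 a b = fun _ => b :=
      funext fun _ => if_neg (Nat.not_lt_zero _)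
    rw [h_step, h_step, sub_self]
    exact schurPositive_zero n
  · rw [← schur_rect_mul_schur_step hc ht' ht hr]
    exact schurPositive_schur_mul_schur n _ _ _ _

end Rectangles

end SchurPolynomial

/-- for `c, r ≥ 1`, `0 ≤ t ≤ r-1` and `n ≥ 1`,
`s^{[n]}_{(c^{r-1},c-1)} · s^{[n]}_{(c^t,(c-1)^{r-t-1})}
 - s^{[n]}_{(c-1)^r} · s^{[n]}_{((c+1)^t,c^{r-t-1})}` is Schur positive. -/
theorem stmt_16 (c r t n : ℕ) (hc : 1 ≤ c) (hr : 1 ≤ r) (ht : t ≤ r - 1) (hn : 1 ≤ n) :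
    SchurPositive n
      (schur r (fun j => if j < r - 1 then (c : ℤ) else (c : ℤ) - 1) 1 n *
          schur (r - 1) (fun j => if j < t then (c : ℤ) else (c : ℤ) - 1) 1 n -
        schur r (fun _ => (c : ℤ) - 1) 1 n *
          schur (r - 1) (fun j => if j < t then (c : ℤ) + 1 else (c : ℤ)) 1 n) := by
  have htr : t < r := by omega
  have h_step := SchurPolynomial.schurPositive_schur_step_mul_sub hc htr (le_max_right n r)
  have h_rect := SchurPolynomial.schurPositive_schur_step_mul_rect_sub hc htr (le_max_right n r)
  have h_sum := (h_step.add h_rect).truncate (le_max_left n r)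
  rw [sub_add_sub_cancel] at h_sum
  simp only [map_sub, map_mul, SchurPolynomial.truncate_schur (le_max_left n r)] at h_sum
  exact h_sum
end
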